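/- arXiv:1504.06542 — 2 statements merged into one kernel-verified Lean document; each statement's English description precedes it below -/
import Mathlib

section
/- Let λ_{ij} be a cylindrical growth diagram as above. Then λ_{(r−j)(−i)} = (λ_{ij})^c, where λ^c denotes the complementary partition with respect to the k×(n−k) rectangle (the 180° rotation of the complement). -/
/-- `β` is obtained from `α` by adding a single box. -/
def OneBox (α β : YoungDiagram) : Prop := α ≤ β ∧ β.cells.card = α.cells.card + 1

/-- Two cells are adjacent if they share an edge. -/
def AdjCell (c d : ℕ × ℕ) : Prop :=
  (c.1 = d.1 ∧ (c.2 + 1 = d.2 ∨ d.2 + 1 = c.2)) ∨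
  (c.2 = d.2 ∧ (c.1 + 1 = d.1 ∨ d.1 + 1 = c.1))

/-- The local recurrence condition of growth diagrams for a square with corners
`γ ⊆ α, δ ⊆ β`: if the two boxes of `β/γ` are nonadjacent then `α` and `δ` are the
two distinct intermediate partitions between `γ` and `β`. -/
def GrowthSq (γ α δ β : YoungDiagram) : Prop :=
  (∃ c ∈ β.cells, ∃ d ∈ β.cells, c ∉ γ.cells ∧ d ∉ γ.cells ∧ c ≠ d ∧ ¬ AdjCell c d) → α ≠ δ

/-- The `k × m` rectangular Young diagram. -/
def rectYD (k m : ℕ) : YoungDiagram :=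
  ⟨Finset.range k ×ˢ Finset.range m, by
    intro a b hab hb
    simp only [Finset.coe_product, Set.mem_prod, Finset.mem_coe, Finset.mem_range] at hb ⊢
    exact ⟨lt_of_le_of_lt hab.1 hb.1, lt_of_le_of_lt hab.2 hb.2⟩⟩

/-- The complement of `μ` in the `k × m` rectangle, rotated by 180°. -/
def complYD (k m : ℕ) (μ : YoungDiagram) : YoungDiagram :=
  ⟨(rectYD k m).cells.filter (fun c => (k - 1 - c.1, m - 1 - c.2) ∉ μ), by
    intro a b hab hb
    simp only [Finset.coe_filter, Set.mem_setOf_eq, Finset.mem_coe] at hb ⊢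
    refine ⟨(rectYD k m).isLowerSet hab hb.1, fun hmem => hb.2 ?_⟩
    exact μ.isLowerSet ⟨Nat.sub_le_sub_left hab.1 _, Nat.sub_le_sub_left hab.2 _⟩ hmem⟩


/-- A cylindrical growth diagram on the diagonal strip `D = {(i,j) : 0 ≤ i+j ≤ r}`:
vertices are labeled by partitions, each edge of the grid adds one box, each unit
square satisfies the growth-diagram recurrence, the main diagonal is labeled by the
empty partition and the outer diagonal by the `k × m` rectangle. -/
def IsCylGrowth (r k m : ℕ) (L : ℤ → ℤ → YoungDiagram) : Prop :=
  (∀ i j : ℤ, 0 ≤ i + j → i + j + 1 ≤ r → OneBox (L i j) (L (i + 1) j)) ∧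
  (∀ i j : ℤ, 0 ≤ i + j → i + j + 1 ≤ r → OneBox (L i j) (L i (j + 1))) ∧
  (∀ i j : ℤ, 0 ≤ i + j → i + j + 2 ≤ r →
    GrowthSq (L i j) (L i (j + 1)) (L (i + 1) j) (L (i + 1) (j + 1))) ∧
  (∀ i : ℤ, L i (-i) = ⊥) ∧
  (∀ i : ℤ, L i ((r : ℤ) - i) = rectYD k m)

/-!
Fix `(i, j)` and consider the part of the diagram with corners `(i, -i)`, `(i, j)`, `(r - j, -i)`
and `(r - j, j)`, a rectangular growth diagram whose corners carry `∅`, `λ`, `μ` and the full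
rectangle `ν`. Record each side as the word of the rows in which boxes are added. In the spirit of
Greene's theorem, consider how many letters of such a word can be covered by `p` disjoint weakly
decreasing subwords: along the side from `λ` to `ν`, constant subwords at `p` chosen rows cover
the number of boxes of `ν / λ` in these rows, whereas along the opposite side from `∅` to `μ` no
more than `μ₁ + ⋯ + μ_p` letters can be covered. Passing from one side to the other through the
squares of the diagram, the covered number never decreases. This gives the Lidskii-type inequality
that the boxes of `ν / λ` in any `p` rows number at most `μ₁ + ⋯ + μ_p`. Applied to the
last rows of `ν`, for this rectangle and for its transpose, it yields two opposite inequalities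
because `|λ| + |μ| = |ν|`; hence equality holds throughout, and `μ` is the complement of `λ`.
-/

section

open Finset

section Diagrams

variable {α β γ δ μ ν : YoungDiagram}

lemma eq_of_rowLen_eq (h : ∀ i, μ.rowLen i = ν.rowLen i) : μ = ν := by
  ext ⟨i, j⟩
  simp only [YoungDiagram.mem_cells, YoungDiagram.mem_iff_lt_rowLen, h]

lemma rowLen_le_rowLen_of_le (h : μ ≤ ν) (i : ℕ) :
    μ.rowLen i ≤ ν.rowLen i := by
  by_contra! hlt
  exact lt_irrefl _ (YoungDiagram.mem_iff_lt_rowLen.1 (h (YoungDiagram.mem_iff_lt_rowLen.2 hlt)))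

lemma sum_rowLen_le_card (k : ℕ) (μ : YoungDiagram) :
    ∑ i ∈ range k, μ.rowLen i ≤ μ.cells.card := by
  simp only [YoungDiagram.rowLen_eq_card, YoungDiagram.row]
  exact (sum_card_fiberwise_eq_card_filter _ _ _).trans_le (card_filter_le _ _)

lemma mem_rectYD {k m : ℕ} {c : ℕ × ℕ} : c ∈ rectYD k m ↔ c.1 < k ∧ c.2 < m := by
  rw [← YoungDiagram.mem_cells]
  simp only [rectYD, mem_product, mem_range]

lemma rowLen_rectYD {k i : ℕ} (m : ℕ) (hi : i < k) : (rectYD k m).rowLen i = m :=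
  eq_of_forall_lt_iff fun j => by
    rw [← YoungDiagram.mem_iff_lt_rowLen, mem_rectYD, and_iff_right hi]

lemma card_rectYD (k m : ℕ) : (rectYD k m).cells.card = k * m := by
  simp only [rectYD, card_product, card_range]

/-- The row of the box `β / α` when `β` is obtained from `α` by adding a single box
(a junk value otherwise). -/
noncomputable def addedRow (α β : YoungDiagram) : ℕ := sInf {x | α.rowLen x ≠ β.rowLen x}

lemma OneBox.exists_rowLen_eq (h : OneBox α β) :
    ∃ x, ∀ i, β.rowLen i = α.rowLen i + if i = x then 1 else 0 := by
  obtain ⟨hle, hcard⟩ := h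
  have hone : (β.cells \ α.cells).card = 1 := by
    rw [card_sdiff_of_subset hle, hcard, Nat.add_sub_cancel_left]
  obtain ⟨⟨x, z⟩, hbox⟩ := card_eq_one.1 hone
  have mem_iff (i j : ℕ) : (α.rowLen i ≤ j ∧ j < β.rowLen i) ↔ i = x ∧ j = z := by
    simpa [YoungDiagram.mem_iff_lt_rowLen, and_comm] using Finset.ext_iff.1 hbox (i, j)
  refine ⟨x, fun i => ?_⟩
  have hrow := rowLen_le_rowLen_of_le hle i
  have hfirst := mem_iff i (α.rowLen i)
  have hsecond := mem_iff i (α.rowLen i + 1)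
  have hz := mem_iff i z
  split_ifs with hi <;> omega

lemma OneBox.rowLen_eq (h : OneBox α β) (i : ℕ) :
    β.rowLen i = α.rowLen i + if i = addedRow α β then 1 else 0 := by
  obtain ⟨x, hx⟩ := h.exists_rowLen_eq
  have hset : {y | α.rowLen y ≠ β.rowLen y} = {x} := by
    ext y
    simp [hx y]
  rw [addedRow, hset, csInf_singleton, hx]

lemma GrowthSq.symm (h : GrowthSq γ α δ β) : GrowthSq γ δ α β :=
  fun hc => (h hc).symm

lemma GrowthSq.adjCell (h : GrowthSq γ α α β) (hγα : OneBox γ α)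
    (hαβ : OneBox α β) (hne : addedRow α β ≠ addedRow γ α) :
    AdjCell (addedRow γ α, γ.rowLen (addedRow γ α)) (addedRow α β, γ.rowLen (addedRow α β)) := by
  by_contra hadj
  refine h ⟨_, ?_, _, ?_, ?_, ?_, ?_, hadj⟩ rfl
  all_goals simp [YoungDiagram.mem_iff_lt_rowLen, hαβ.rowLen_eq, hγα.rowLen_eq, hne, hne.symm]

lemma GrowthSq.addedRow_eq_or (h : GrowthSq γ α δ β)
    (hγα : OneBox γ α) (hγδ : OneBox γ δ) (hαβ : OneBox α β) (hδβ : OneBox δ β) :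
    addedRow α β = addedRow γ δ ∨
      addedRow α β = addedRow γ δ + 1 ∧
        β.rowLen (addedRow γ δ) = β.rowLen (addedRow γ δ + 1) := by
  by_cases hrow : addedRow γ α = addedRow γ δ
  · have hαδ : α = δ := eq_of_rowLen_eq fun i => by rw [hγα.rowLen_eq, hγδ.rowLen_eq, hrow]
    subst hαδ
    refine or_iff_not_imp_left.2 fun hne => ?_
    rcases h.adjCell hγα hαβ hne with ⟨hsame, -⟩ | ⟨hcol, hbelow | habove⟩
    · exact absurd hsame.symm hne
    · dsimp only at hcol hbelow
      simp [hαβ.rowLen_eq, hγα.rowLen_eq, ← hbelow, hcol]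
    · dsimp only at hcol habove
      have hanti := α.rowLen_anti _ _ (Nat.le_succ (addedRow α β))
      simp only [Nat.succ_eq_add_one, habove, hγα.rowLen_eq, hcol, if_true, if_neg hne] at hanti
      omega
  · have hδ := hγδ.rowLen_eq (addedRow γ δ)
    have hα := hγα.rowLen_eq (addedRow γ δ)
    have hβ := hαβ.rowLen_eq (addedRow γ δ)
    have hβ' := hδβ.rowLen_eq (addedRow γ δ)
    rw [if_pos rfl] at hδ
    rw [if_neg (Ne.symm hrow)] at hα
    split_ifs at hβ with hx
    · exact Or.inl hx.symm
    · omega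

end Diagrams

section Words

variable {p n s v : ℕ} {w w' : ℕ → ℕ} {ℓ : ℕ → ℕ → ℕ} {μ : ℕ → YoungDiagram}

/-- The word of a chain of diagrams in which each step adds a box: its letter at time `τ` is the
row of the box added in the step from `μ τ` to `μ (τ + 1)`. -/
noncomputable def boxWord (μ : ℕ → YoungDiagram) (τ : ℕ) : ℕ := addedRow (μ τ) (μ (τ + 1))

lemma rowLen_eq_add_card_boxWord (hμ : ∀ τ < n, OneBox (μ τ) (μ (τ + 1))) (y : ℕ) {a b : ℕ}
    (hab : a ≤ b) (hb : b ≤ n) :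
    (μ b).rowLen y = (μ a).rowLen y + #{τ ∈ Ico a b | boxWord μ τ = y} := by
  induction b, hab using Nat.le_induction with
  | base => simp
  | succ b hab ih =>
    rw [(hμ b hb).rowLen_eq, ih (Nat.le_of_succ_le hb), card_filter, card_filter,
      sum_Ico_succ_top hab, add_assoc]
    simp only [boxWord, eq_comm]

lemma card_boxWord_eq_succ_le (hμ : ∀ τ < n, OneBox (μ τ) (μ (τ + 1))) {a b : ℕ} (hb : b ≤ n)
    (htie : (μ a).rowLen v = (μ a).rowLen (v + 1)) :
    #{τ ∈ Ico a b | boxWord μ τ = v + 1} ≤ #{τ ∈ Ico a b | boxWord μ τ = v} := by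
  rcases le_total b a with hba | hab
  · simp only [Ico_eq_empty_of_le hba, filter_empty, le_refl]
  · have hanti := (μ b).rowLen_anti _ _ (Nat.le_succ v)
    rw [rowLen_eq_add_card_boxWord hμ _ hab hb, rowLen_eq_add_card_boxWord hμ v hab hb, htie]
      at hanti
    exact Nat.le_of_add_le_add_left hanti

/-- A family of weakly decreasing sequences, `ℓ q τ` being the value of the `q`-th sequence at
time `τ`, which at every time are pairwise distinct and listed in increasing order. -/
structure IsDescendingFamily (ℓ : ℕ → ℕ → ℕ) : Prop where
  strictMono (τ : ℕ) : StrictMono fun q => ℓ q τ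
  antitone (q : ℕ) : Antitone (ℓ q)

/-- The number of letters of the word `w 0, …, w (n - 1)` met by the sequences
`ℓ 0, …, ℓ (p - 1)`. The letters met by a single one of them form a weakly decreasing subword. -/
def coverage (p n : ℕ) (w : ℕ → ℕ) (ℓ : ℕ → ℕ → ℕ) : ℕ :=
  ∑ q ∈ range p, #{τ ∈ range n | w τ = ℓ q τ}

/-- Whatever `p` sequences of a descending family can cover in the word `w 0, …, w (n - 1)`, they
can also cover, after modification, in `w' 0, …, w' (n - 1)`. -/
def CoverLE (p n : ℕ) (w w' : ℕ → ℕ) : Prop :=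
  ∀ ℓ, IsDescendingFamily ℓ →
    ∃ ℓ', IsDescendingFamily ℓ' ∧ coverage p n w ℓ ≤ coverage p n w' ℓ'

lemma CoverLE.trans {w₁ w₂ w₃ : ℕ → ℕ} (h₁₂ : CoverLE p n w₁ w₂)
    (h₂₃ : CoverLE p n w₂ w₃) : CoverLE p n w₁ w₃ := fun ℓ₁ hℓ₁ => by
  obtain ⟨ℓ₂, hℓ₂, hle₁₂⟩ := h₁₂ ℓ₁ hℓ₁
  obtain ⟨ℓ₃, hℓ₃, hle₂₃⟩ := h₂₃ ℓ₂ hℓ₂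
  exact ⟨ℓ₃, hℓ₃, hle₁₂.trans hle₂₃⟩

lemma coverage_congr (h : ∀ τ < n, w τ = w' τ) (ℓ : ℕ → ℕ → ℕ) :
    coverage p n w ℓ = coverage p n w' ℓ :=
  sum_congr rfl fun q _ => congrArg card <| filter_congr fun τ hτ => by rw [h τ (mem_range.1 hτ)]

lemma coverLE_of_forall_eq (h : ∀ τ < n, w τ = w' τ) : CoverLE p n w w' :=
  fun ℓ hℓ => ⟨ℓ, hℓ, (coverage_congr h ℓ).le⟩

lemma coverage_eq_sum_range (p n : ℕ) (w : ℕ → ℕ) (ℓ : ℕ → ℕ → ℕ) :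
    coverage p n w ℓ = ∑ τ ∈ range n, #{q ∈ range p | w τ = ℓ q τ} := by
  simp only [coverage, card_filter]
  exact sum_comm

lemma IsDescendingFamily.card_filter_eq_le_one (hℓ : IsDescendingFamily ℓ) (p y τ : ℕ) :
    #{q ∈ range p | y = ℓ q τ} ≤ 1 :=
  card_le_one.2 fun _ hq _ hq' =>
    (hℓ.strictMono τ).injective ((mem_filter.1 hq).2.symm.trans (mem_filter.1 hq').2)

lemma IsDescendingFamily.coverage_le_coverage_update (hℓ : IsDescendingFamily ℓ) (n : ℕ)
    (h : (∃ q < p, w s = ℓ q s) → ∃ q < p, v = ℓ q s) :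
    coverage p n w ℓ ≤ coverage p n (Function.update w s v) ℓ := by
  rw [coverage_eq_sum_range, coverage_eq_sum_range]
  refine sum_le_sum fun τ _ => ?_
  rcases eq_or_ne τ s with rfl | hτ
  · rw [Function.update_self]
    rcases Finset.eq_empty_or_nonempty {q ∈ range p | w τ = ℓ q τ} with hempty | ⟨q, hq⟩
    · simp only [hempty, card_empty, zero_le]
    · obtain ⟨q', hq', hv⟩ := h ⟨q, mem_range.1 (mem_filter.1 hq).1, (mem_filter.1 hq).2⟩
      exact (hℓ.card_filter_eq_le_one p _ τ).trans
        (card_pos.2 ⟨q', mem_filter.2 ⟨mem_range.2 hq', hv⟩⟩)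
  · rw [Function.update_of_ne hτ]

/-- The sequence `a`, lowered to values at most `v` from time `s` on. -/
def lowerFrom (s v : ℕ) (a : ℕ → ℕ) (τ : ℕ) : ℕ := if τ < s then a τ else min (a τ) v

lemma lowerFrom_le (s v : ℕ) (a : ℕ → ℕ) (τ : ℕ) : lowerFrom s v a τ ≤ a τ := by
  rw [lowerFrom]
  split_ifs
  exacts [le_rfl, min_le_left _ _]

lemma antitone_lowerFrom {a : ℕ → ℕ} (ha : Antitone a) (s v : ℕ) :
    Antitone (lowerFrom s v a) := fun τ τ' hτ => by
  have hle := ha hτ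
  simp only [lowerFrom]
  split_ifs <;> omega

lemma IsDescendingFamily.update_lowerFrom (hℓ : IsDescendingFamily ℓ) {q₀ : ℕ}
    (hv : ∀ q < q₀, ℓ q s < v) :
    IsDescendingFamily (Function.update ℓ q₀ (lowerFrom s v (ℓ q₀))) where
  strictMono τ q q' hq := by
    have hlt := hℓ.strictMono τ hq
    dsimp only at hlt ⊢
    rcases eq_or_ne q' q₀ with rfl | hq'
    · rw [Function.update_of_ne hq.ne, Function.update_self, lowerFrom]
      split_ifs with hτ
      · exact hlt
      · exact lt_min hlt ((hℓ.antitone q (not_lt.1 hτ)).trans_lt (hv q hq))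
    · rw [Function.update_of_ne hq']
      rcases eq_or_ne q q₀ with rfl | hqq
      · rw [Function.update_self]
        exact (lowerFrom_le s v (ℓ q) τ).trans_lt hlt
      · rwa [Function.update_of_ne hqq]
  antitone q := by
    rcases eq_or_ne q q₀ with rfl | hq
    · rw [Function.update_self]
      exact antitone_lowerFrom (hℓ.antitone q) s v
    · rw [Function.update_of_ne hq]
      exact hℓ.antitone q

lemma card_filter_range_eq_add_one_add {P : ℕ → Prop} [DecidablePred P] (hs : s < n) (hP : P s) :
    #{τ ∈ range n | P τ} = #{τ ∈ range s | P τ} + (1 + #{τ ∈ Ico (s + 1) n | P τ}) := by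
  rw [card_filter, card_filter, card_filter, ← sum_range_add_sum_Ico _ hs.le,
    sum_eq_sum_Ico_succ_bot hs, if_pos hP]

lemma card_filter_eq_le_card_filter_lowerFrom_of_lt {a : ℕ → ℕ} (ha : Antitone a) (hs : s < n)
    (hws : w s = v + 1) (has : a s = v + 1) (hlast : v < a (n - 1))
    (htie : #{τ ∈ Ico (s + 1) n | w τ = v + 1} ≤ #{τ ∈ Ico (s + 1) n | w τ = v}) :
    #{τ ∈ range n | w τ = a τ} ≤
      #{τ ∈ range n | Function.update w s v τ = lowerFrom s v a τ} := by
  have hbefore : {τ ∈ range s | Function.update w s v τ = lowerFrom s v a τ} =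
      {τ ∈ range s | w τ = a τ} := filter_congr fun τ hτ => by
    rw [Function.update_of_ne (mem_range.1 hτ).ne, lowerFrom, if_pos (mem_range.1 hτ)]
  have haτ (τ : ℕ) (hτ : τ ∈ Ico (s + 1) n) : a τ = v + 1 := by
    rw [mem_Ico] at hτ
    exact le_antisymm (has ▸ ha (by omega)) (Nat.lt_of_lt_of_le hlast (ha (by omega)))
  have hafter : {τ ∈ Ico (s + 1) n | w τ = a τ} = {τ ∈ Ico (s + 1) n | w τ = v + 1} :=
    filter_congr fun τ hτ => by rw [haτ τ hτ]
  have hafter' : {τ ∈ Ico (s + 1) n | Function.update w s v τ = lowerFrom s v a τ} =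
      {τ ∈ Ico (s + 1) n | w τ = v} := filter_congr fun τ hτ => by
    have hsτ : s < τ := (mem_Ico.1 hτ).1
    rw [Function.update_of_ne hsτ.ne', lowerFrom, if_neg hsτ.not_gt, haτ τ hτ,
      min_eq_right (Nat.le_succ v)]
  have hmeet : w s = a s := hws.trans has.symm
  have hmeet' : Function.update w s v s = lowerFrom s v a s := by simp [lowerFrom, has]
  rw [card_filter_range_eq_add_one_add (P := fun τ => w τ = a τ) hs hmeet,
    card_filter_range_eq_add_one_add (P := fun τ => Function.update w s v τ = _) hs hmeet',
    hbefore, hafter, hafter']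
  gcongr

-- The lowered sequence loses the letters `v + 1` that it met while its value was `v + 1`, but
-- gains at least as many letters `v`.
lemma card_filter_eq_le_card_filter_lowerFrom {a : ℕ → ℕ} (ha : Antitone a) (hs : s < n)
    (hws : w s = v + 1) (has : a s = v + 1)
    (htie : ∀ b ≤ n, #{τ ∈ Ico (s + 1) b | w τ = v + 1} ≤ #{τ ∈ Ico (s + 1) b | w τ = v}) :
    #{τ ∈ range n | w τ = a τ} ≤
      #{τ ∈ range n | Function.update w s v τ = lowerFrom s v a τ} := by
  induction n with
  | zero => exact absurd hs (Nat.not_lt_zero s)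
  | succ n ih =>
    rcases lt_or_ge v (a n) with hhigh | hlow
    · exact card_filter_eq_le_card_filter_lowerFrom_of_lt ha hs hws has hhigh (htie _ le_rfl)
    · have hsn : s < n := by
        refine lt_of_le_of_ne (Nat.le_of_lt_succ hs) ?_
        rintro rfl
        omega
      have hlast : Function.update w s v n = lowerFrom s v a n ↔ w n = a n := by
        rw [Function.update_of_ne hsn.ne', lowerFrom, if_neg hsn.not_gt, min_eq_left hlow]
      have ih := ih hsn fun b hb => htie b (hb.trans (Nat.le_succ n))
      rw [card_filter, card_filter] at ih ⊢
      simp only [sum_range_succ, hlast]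
      gcongr

lemma coverLE_update (hs : s < n) (hws : w s = v + 1)
    (htie : ∀ b ≤ n, #{τ ∈ Ico (s + 1) b | w τ = v + 1} ≤ #{τ ∈ Ico (s + 1) b | w τ = v}) :
    CoverLE p n w (Function.update w s v) := by
  intro ℓ hℓ
  by_cases hkeep : (∃ q < p, w s = ℓ q s) → ∃ q < p, v = ℓ q s
  · exact ⟨ℓ, hℓ, hℓ.coverage_le_coverage_update n hkeep⟩
  push Not at hkeep
  obtain ⟨⟨q₀, hq₀, hmeet⟩, hmiss⟩ := hkeep
  have hbelow : ∀ q < q₀, ℓ q s < v := fun q hq => by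
    have hlt : ℓ q s < ℓ q₀ s := hℓ.strictMono s hq
    have hne := hmiss q (hq.trans hq₀)
    omega
  refine ⟨_, hℓ.update_lowerFrom hbelow, sum_le_sum fun q _ => ?_⟩
  rcases eq_or_ne q q₀ with rfl | hne
  · rw [Function.update_self]
    exact card_filter_eq_le_card_filter_lowerFrom (hℓ.antitone q) hs hws (hmeet ▸ hws) htie
  · rw [Function.update_of_ne hne]
    refine card_le_card fun τ hτ => ?_
    obtain ⟨hτn, hτ⟩ := mem_filter.1 hτ
    have hτs : τ ≠ s := by
      rintro rfl
      exact hne ((hℓ.strictMono τ).injective (hτ.symm.trans hmeet))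
    exact mem_filter.2 ⟨hτn, by rwa [Function.update_of_ne hτs]⟩

lemma sum_rowLen_eq_add_coverage_const (hμ : ∀ τ < n, OneBox (μ τ) (μ (τ + 1)))
    (x : ℕ → ℕ) :
    ∑ q ∈ range p, (μ n).rowLen (x q) =
      ∑ q ∈ range p, (μ 0).rowLen (x q) + coverage p n (boxWord μ) fun q _ => x q := by
  rw [coverage, ← sum_add_distrib]
  refine sum_congr rfl fun q _ => ?_
  rw [rowLen_eq_add_card_boxWord hμ _ n.zero_le le_rfl, range_eq_Ico]

lemma IsDescendingFamily.coverage_le_sum_rowLen (hℓ : IsDescendingFamily ℓ) (p : ℕ)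
    (hμ : ∀ τ < n, OneBox (μ τ) (μ (τ + 1))) :
    coverage p n (boxWord μ) ℓ ≤ ∑ q ∈ range p, (μ n).rowLen (ℓ q n) := by
  induction n with
  | zero => simp [coverage]
  | succ n ih =>
    specialize ih fun τ hτ => hμ τ (hτ.trans (Nat.lt_succ_self n))
    have hstep (q : ℕ) : (μ n).rowLen (ℓ q n) + (if boxWord μ n = ℓ q n then 1 else 0) ≤
        (μ (n + 1)).rowLen (ℓ q (n + 1)) := by
      have hrow := (hμ n (Nat.lt_succ_self n)).rowLen_eq (ℓ q n)
      simp only [eq_comm (a := ℓ q n)] at hrow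
      exact hrow.ge.trans ((μ (n + 1)).rowLen_anti _ _ (hℓ.antitone q (Nat.le_succ n)))
    refine le_trans ?_ (sum_le_sum fun q _ => hstep q)
    rw [coverage_eq_sum_range, sum_range_succ, ← coverage_eq_sum_range, sum_add_distrib,
      card_filter]
    gcongr

lemma IsDescendingFamily.coverage_le_sum_range_rowLen (hℓ : IsDescendingFamily ℓ) (p : ℕ)
    (hμ : ∀ τ < n, OneBox (μ τ) (μ (τ + 1))) :
    coverage p n (boxWord μ) ℓ ≤ ∑ q ∈ range p, (μ n).rowLen q :=
  (hℓ.coverage_le_sum_rowLen p hμ).trans <|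
    sum_le_sum fun _ _ => (μ n).rowLen_anti _ _ (hℓ.strictMono n).le_apply

end Words

section GrowthRectangles

/-- A rectangular growth diagram: a grid of partitions with corners `A 0 0` and `A S T`, each edge
of which adds one box and each square of which satisfies the growth-diagram recurrence. Values of
`A` outside the rectangle are irrelevant. -/
structure IsGrowthRect (S T : ℕ) (A : ℕ → ℕ → YoungDiagram) : Prop where
  oneBox_left {s t : ℕ} (hs : s < S) (ht : t ≤ T) : OneBox (A s t) (A (s + 1) t)
  oneBox_right {s t : ℕ} (hs : s ≤ S) (ht : t < T) : OneBox (A s t) (A s (t + 1))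
  growthSq {s t : ℕ} (hs : s < S) (ht : t < T) :
    GrowthSq (A s t) (A s (t + 1)) (A (s + 1) t) (A (s + 1) (t + 1))

namespace IsGrowthRect

variable {S T : ℕ} {A : ℕ → ℕ → YoungDiagram}

lemma transpose (hA : IsGrowthRect S T A) : IsGrowthRect T S fun s t => A t s where
  oneBox_left hs ht := hA.oneBox_right ht hs
  oneBox_right hs ht := hA.oneBox_left ht hs
  growthSq hs ht := (hA.growthSq ht hs).symm

lemma card_cells_right (hA : IsGrowthRect S T A) {s t : ℕ} (hs : s ≤ S) (ht : t ≤ T) :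
    (A s t).cells.card = (A s 0).cells.card + t := by
  induction t with
  | zero => rfl
  | succ t ih => rw [(hA.oneBox_right hs ht).2, ih (Nat.le_of_succ_le ht), add_assoc]

lemma le_right (hA : IsGrowthRect S T A) {s t : ℕ} (hs : s ≤ S) (ht : t ≤ T) : A s 0 ≤ A s t := by
  induction t with
  | zero => rfl
  | succ t ih => exact (ih (Nat.le_of_succ_le ht)).trans (hA.oneBox_right hs ht).1

lemma boxWord_eq_or (hA : IsGrowthRect S T A) {s t : ℕ} (hs : s < S) (ht : t < T) :
    boxWord (A · (t + 1)) s = boxWord (A · t) s ∨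
      boxWord (A · (t + 1)) s = boxWord (A · t) s + 1 ∧
        (A (s + 1) (t + 1)).rowLen (boxWord (A · t) s) =
          (A (s + 1) (t + 1)).rowLen (boxWord (A · t) s + 1) :=
  (hA.growthSq hs ht).addedRow_eq_or (hA.oneBox_right hs.le ht) (hA.oneBox_left hs ht.le)
    (hA.oneBox_left hs ht) (hA.oneBox_right hs ht)

lemma coverLE_piecewise (hA : IsGrowthRect S T A) (p : ℕ) {s t : ℕ} (hs : s ≤ S) (ht : t < T) :
    CoverLE p S (boxWord (A · (t + 1)))
      ((range s).piecewise (boxWord (A · t)) (boxWord (A · (t + 1)))) := by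
  induction s with
  | zero => exact coverLE_of_forall_eq fun τ _ => by rw [range_zero, piecewise_empty]
  | succ s ih =>
    refine (ih (Nat.le_of_succ_le hs)).trans ?_
    rw [range_add_one, piecewise_insert]
    have hright {τ : ℕ} (hτ : s ≤ τ) : (range s).piecewise (boxWord (A · t))
        (boxWord (A · (t + 1))) τ = boxWord (A · (t + 1)) τ :=
      piecewise_eq_of_notMem _ _ _ (by simpa only [mem_range, not_lt] using hτ)
    rcases hA.boxWord_eq_or hs ht with hsame | ⟨hdrop, htie⟩
    · rw [← hsame, ← hright le_rfl, Function.update_eq_self]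
      exact coverLE_of_forall_eq fun _ _ => rfl
    · refine coverLE_update hs ((hright le_rfl).trans hdrop) fun b hb => ?_
      have hafter (y : ℕ) := filter_congr (s := Ico (s + 1) b) fun τ hτ =>
        (congrArg (· = y) (hright (Nat.le_of_succ_le (mem_Ico.1 hτ).1))).to_iff
      rw [hafter, hafter]
      exact card_boxWord_eq_succ_le (μ := (A · (t + 1))) (fun τ hτ => hA.oneBox_left hτ ht) hb htie

lemma coverLE_boxWord_zero (hA : IsGrowthRect S T A) (p : ℕ) {t : ℕ} (ht : t ≤ T) :
    CoverLE p S (boxWord (A · t)) (boxWord (A · 0)) := by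
  induction t with
  | zero => exact coverLE_of_forall_eq fun _ _ => rfl
  | succ t ih =>
    refine .trans ?_ (ih (Nat.le_of_succ_le ht))
    exact (hA.coverLE_piecewise p le_rfl ht).trans
      (coverLE_of_forall_eq fun τ hτ => piecewise_eq_of_mem _ _ _ (mem_range.2 hτ))

lemma sum_rowLen_le_add (hA : IsGrowthRect S T A) {x : ℕ → ℕ} (hx : StrictMono x) (p : ℕ) :
    ∑ q ∈ range p, (A S T).rowLen (x q) ≤
      ∑ q ∈ range p, (A 0 T).rowLen (x q) + ∑ q ∈ range p, (A S 0).rowLen q := by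
  have hconst : IsDescendingFamily fun q _ => x q := ⟨fun _ => hx, fun _ => antitone_const⟩
  obtain ⟨ℓ, hℓ, hle⟩ := hA.coverLE_boxWord_zero p le_rfl _ hconst
  rw [sum_rowLen_eq_add_coverage_const (μ := (A · T)) (fun τ hτ => hA.oneBox_left hτ le_rfl)]
  gcongr
  exact hle.trans (hℓ.coverage_le_sum_range_rowLen p fun τ hτ => hA.oneBox_left hτ T.zero_le)

lemma mul_add_sum_rowLen_le (hA : IsGrowthRect S T A) {a b m : ℕ}
    (htop : A S T = rectYD (b + a) m) :
    a * m + ∑ i ∈ range b, (A 0 T).rowLen i ≤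
      ∑ i ∈ range a, (A S 0).rowLen i + ∑ i ∈ range (b + a), (A 0 T).rowLen i := by
  have hfull : ∑ q ∈ range a, (A S T).rowLen (b + q) = a * m := by
    rw [htop, sum_congr rfl fun q hq =>
      rowLen_rectYD m (Nat.add_lt_add_left (mem_range.1 hq) b), sum_const, card_range, smul_eq_mul]
  have hlast := hA.sum_rowLen_le_add (fun _ _ h => Nat.add_lt_add_left h b : StrictMono (b + ·)) a
  rw [hfull] at hlast
  rw [sum_range_add]
  omega

lemma card_cells_add_card_cells (hA : IsGrowthRect S T A) (hbot : A 0 0 = ⊥) :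
    (A S 0).cells.card + (A 0 T).cells.card = (A S T).cells.card := by
  rw [hA.card_cells_right le_rfl le_rfl, hA.card_cells_right S.zero_le le_rfl, hbot,
    YoungDiagram.cells_bot, card_empty, zero_add]

lemma sum_rowLen_add_sum_rowLen (hA : IsGrowthRect S T A) (hbot : A 0 0 = ⊥) {a b m : ℕ}
    (htop : A S T = rectYD (b + a) m) :
    ∑ i ∈ range a, (A S 0).rowLen i + ∑ i ∈ range (b + a), (A 0 T).rowLen i =
      a * m + ∑ i ∈ range b, (A 0 T).rowLen i := by
  refine le_antisymm ?_ (hA.mul_add_sum_rowLen_le htop)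
  have htranspose := hA.transpose.mul_add_sum_rowLen_le (a := b) (b := a)
    (htop.trans (by rw [add_comm b a]))
  have hcard := hA.card_cells_add_card_cells hbot
  have hleft := sum_rowLen_le_card (b + a) (A S 0)
  have hright := sum_rowLen_le_card (b + a) (A 0 T)
  rw [htop, card_rectYD, add_mul] at hcard
  rw [add_comm a b] at htranspose
  omega

lemma rowLen_add_rowLen (hA : IsGrowthRect S T A) (hbot : A 0 0 = ⊥) {a b m : ℕ}
    (htop : A S T = rectYD (b + 1 + a) m) : (A S 0).rowLen a + (A 0 T).rowLen b = m := by
  have hlong := hA.sum_rowLen_add_sum_rowLen hbot htop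
  rw [add_right_comm, add_assoc] at htop
  have hshort := hA.sum_rowLen_add_sum_rowLen hbot htop
  rw [sum_range_succ, add_mul, one_mul, ← add_assoc b a 1, add_right_comm b a 1] at hshort
  rw [sum_range_succ _ b] at hlong
  omega

theorem eq_complYD (hA : IsGrowthRect S T A) (hbot : A 0 0 = ⊥) {k m : ℕ}
    (htop : A S T = rectYD k m) : A S 0 = complYD k m (A 0 T) := by
  have hle : A S 0 ≤ rectYD k m := htop ▸ hA.le_right le_rfl le_rfl
  ext ⟨i, j⟩
  simp only [complYD, mem_filter, YoungDiagram.mem_cells]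
  by_cases hij : (i, j) ∈ rectYD k m
  · obtain ⟨hi, hj⟩ : i < k ∧ j < m := mem_rectYD.1 hij
    have hrow := hA.rowLen_add_rowLen hbot (a := i) (b := k - 1 - i) (m := m)
      (by rw [htop]; congr 1; omega)
    simp only [hij, true_and, YoungDiagram.mem_iff_lt_rowLen]
    omega
  · exact iff_of_false (fun h => hij (hle h)) fun h => hij h.1

end IsGrowthRect

lemma IsCylGrowth.isGrowthRect {r k m : ℕ} {L : ℤ → ℤ → YoungDiagram} (hL : IsCylGrowth r k m L)
    (i : ℤ) {S T : ℕ} (hST : S + T = r) :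
    IsGrowthRect S T fun s t => L (i + s) (-i + t) where
  oneBox_left {s t} hs ht := by
    push_cast
    rw [← add_assoc]
    exact hL.1 _ _ (by omega) (by omega)
  oneBox_right {s t} hs ht := by
    push_cast
    rw [← add_assoc]
    exact hL.2.1 _ _ (by omega) (by omega)
  growthSq {s t} hs ht := by
    push_cast
    rw [← add_assoc, ← add_assoc]
    exact hL.2.2.1 _ _ (by omega) (by omega)

end GrowthRectangles

end

/-- The symmetry of a cylindrical growth diagram:
`λ_{(r−j)(−i)} = (λ_{ij})^c`, where `λ^c` is the complementary partition with respect
to the `k × m` rectangle. -/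
theorem cylindrical_growth_complement_symmetry
    (r k m : ℕ) (hr : r = k * m) (L : ℤ → ℤ → YoungDiagram)
    (hL : IsCylGrowth r k m L) :
    ∀ i j : ℤ, 0 ≤ i + j → i + j ≤ r → L ((r : ℤ) - j) (-i) = complYD k m (L i j) := by
  intro i j hij hijr
  obtain ⟨T, hT⟩ := Int.eq_ofNat_of_zero_le hij
  obtain ⟨S, hS⟩ := Int.eq_ofNat_of_zero_le (sub_nonneg.2 hijr)
  have hcorner : L (i + S) (-i + T) = rectYD k m := by
    rw [← hL.2.2.2.2 (i + S)]
    congr 1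
    omega
  have hsymm := (hL.isGrowthRect i (show S + T = r by omega)).eq_complYD
    (by simpa using hL.2.2.2.1 i) hcorner
  have hS' : i + S = r - j := by omega
  have hT' : -i + T = j := by omega
  simpa only [Nat.cast_zero, add_zero, hS', hT'] using hsymm
end

section
/- Let D be a dual equivalence class and S a slide (jeu de taquin) equivalence class of skew standard tableaux, such that the rectification shape of D equals the shape of the rectification tableau of S. Then there is a unique tableau lying in both D and S. -/
/-- A chain of partitions of length `m`, each step adding one box
(the chain encoding of a skew standard Young tableau). -/
def IsChain' (m : ℕ) (S : ℕ → YoungDiagram) : Prop := ∀ i, i < m → OneBox (S i) (S (i + 1))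

/-- A growth diagram on the rectangle `[0,t] × [0,s]`. -/
def IsGrowth (t s : ℕ) (L : ℕ → ℕ → YoungDiagram) : Prop :=
  (∀ i j, i < t → j ≤ s → OneBox (L i j) (L (i + 1) j)) ∧
  (∀ i j, i ≤ t → j < s → OneBox (L i j) (L i (j + 1))) ∧
  (∀ i j, i < t → j < s → GrowthSq (L i j) (L i (j + 1)) (L (i + 1) j) (L (i + 1) (j + 1)))

/-- `(S, T)` shuffles to `(T', S')`: there is a growth diagram on `[0,t] × [0,s]` whose
left edge is the chain `S` (length `s`), top edge is `T` (length `t`), bottom edge is `T'`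
and right edge is `S'`.  This encodes the jeu de taquin shuffle of a pair of skew
standard tableaux. -/
def ShufflesTo (s t : ℕ) (S T T' S' : ℕ → YoungDiagram) : Prop :=
  ∃ L, IsGrowth t s L ∧ (∀ j, j ≤ s → L 0 j = S j) ∧ (∀ i, i ≤ t → L i s = T i) ∧
    (∀ i, i ≤ t → L i 0 = T' i) ∧ (∀ j, j ≤ s → L t j = S' j)

/-- `R` is the rectification of the chain (skew tableau) `T`: shuffling some straight-shape
chain `A` with `T` produces the straight-shape chain `R`. -/
def Rectifies (m : ℕ) (T R : ℕ → YoungDiagram) : Prop :=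
  R 0 = ⊥ ∧ ∃ s A A', A 0 = ⊥ ∧ ShufflesTo s m A T R A'

/-- Dual equivalence of two chains (skew standard tableaux) of length `m`: they have the same
shape, and shuffling any other tableau through them gives identical results. -/
def DualEquiv (m : ℕ) (S S' : ℕ → YoungDiagram) : Prop :=
  S 0 = S' 0 ∧ S m = S' m ∧
  (∀ t T A B A' B', ShufflesTo m t S T A B → ShufflesTo m t S' T A' B' →
    ∀ i, i ≤ t → A i = A' i) ∧
  (∀ t T A B A' B', ShufflesTo t m T S A B → ShufflesTo t m T S' A' B' →
    ∀ i, i ≤ t → B i = B' i)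

/-- Slide (jeu de taquin) equivalence: two chains with a common rectification. -/
def SlideEquiv (m : ℕ) (T T' : ℕ → YoungDiagram) : Prop :=
  ∃ R, Rectifies m T R ∧ Rectifies m T' R

/-!
A chain is determined by its starting diagram and the contents of its boxes, and a unit square of a
growth diagram interchanges the two contents if they differ by at least two and keeps them
otherwise. Call two chains of the same shape elementarily dual equivalent if the contents of three
consecutive boxes differ by a Knuth move. Sliding a box through both chains preserves this relation
and gives the same outcome for the box, so the generated equivalence relation implies dual
equivalence. Any two straight chains of the same shape are related by it: if their last boxes
differ, then after removing both boxes one can remove a box of content strictly between theirs, so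
interchanging the last two boxes of a suitable chain is a Knuth move, and induction does the rest.
In particular the rectification of a tableau is unique.

For existence, slide the rectification tableau of the slide class back along the chain that
rectifies the dual equivalence class. For uniqueness, a tableau can be recovered from the pair
obtained by shuffling it with a straight chain, whose two entries depend only on the slide class and
on the dual equivalence class respectively.
-/

/-! ### Contents of added boxes -/

/-- The content `j - i` of the cell in row `i` and column `j`. -/
def cellContent (p : ℕ × ℕ) : ℤ := p.2 - p.1

/-- The sum of the contents of the cells of a diagram. -/
def contentSum (α : YoungDiagram) : ℤ := ∑ p ∈ α.cells, cellContent p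

/-- The content of the single box of `β / α`. It is encoded as a difference of content sums, so
that no box has to be chosen; it is meaningful only when `OneBox α β`. -/
def boxContent (α β : YoungDiagram) : ℤ := contentSum β - contentSum α

theorem boxContent_inf_left (α β : YoungDiagram) :
    boxContent (α ⊓ β) α = boxContent β (α ⊔ β) := by
  have h := Finset.sum_union_inter (s₁ := α.cells) (s₂ := β.cells) (f := cellContent)
  rw [← YoungDiagram.cells_sup, ← YoungDiagram.cells_inf] at h
  simp only [boxContent, contentSum]
  linarith

theorem boxContent_eq_cellContent {α β : YoungDiagram} {p : ℕ × ℕ} (hp : p ∉ α)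
    (h : β.cells = insert p α.cells) : boxContent α β = cellContent p := by
  simp only [boxContent, contentSum, h]
  rw [Finset.sum_insert (by simpa using hp)]
  ring

theorem card_sup_add_card_inf (α β : YoungDiagram) :
    (α ⊔ β).cells.card + (α ⊓ β).cells.card = α.cells.card + β.cells.card := by
  rw [YoungDiagram.cells_sup, YoungDiagram.cells_inf, Finset.card_union_add_card_inter]

namespace OneBox

variable {α α' β γ : YoungDiagram}

theorem exists_insert (h : OneBox α β) : ∃ p ∉ α, β.cells = insert p α.cells := by
  obtain ⟨p, hp, hβ⟩ :=
    Finset.exists_eq_insert_iff.2 ⟨YoungDiagram.cells_subset_iff.2 h.1, h.2.symm⟩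
  exact ⟨p, by simpa using hp, hβ.symm⟩

theorem of_insert {p : ℕ × ℕ} (hp : p ∉ α) (h : β.cells = insert p α.cells) : OneBox α β :=
  ⟨YoungDiagram.cells_subset_iff.1 (h ▸ Finset.subset_insert p α.cells),
    by rw [h, Finset.card_insert_of_notMem (by simpa using hp)]⟩

protected theorem lt (h : OneBox α β) : α < β :=
  lt_of_le_of_ne h.1 fun hαβ => by simpa [hαβ] using h.2

protected theorem covBy (h : OneBox α β) : α ⋖ β := by
  refine ⟨h.lt, fun ν hα hβ => ?_⟩
  have h₁ := Finset.card_lt_card (YoungDiagram.cells_ssubset_iff.2 hα)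
  have h₂ := Finset.card_lt_card (YoungDiagram.cells_ssubset_iff.2 hβ)
  have h₃ := h.2
  omega

theorem sup_eq (h : OneBox α β) (h' : OneBox α' β) (hne : α ≠ α') : α ⊔ α' = β :=
  h.covBy.wcovBy.sup_eq h'.covBy.wcovBy hne

theorem inf_eq (h : OneBox γ α) (h' : OneBox γ α') (hne : α ≠ α') : α ⊓ α' = γ :=
  h.covBy.wcovBy.inf_eq h'.covBy.wcovBy hne

theorem inf_left (h : OneBox α β) (h' : OneBox α' β) (hne : α ≠ α') : OneBox (α ⊓ α') α := by
  have hcard := card_sup_add_card_inf α α'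
  rw [h.sup_eq h' hne] at hcard
  exact ⟨inf_le_left, by have := h'.2; omega⟩

theorem sup_right (h : OneBox γ α) (h' : OneBox γ α') (hne : α ≠ α') : OneBox α' (α ⊔ α') := by
  have hcard := card_sup_add_card_inf α α'
  rw [h.inf_eq h' hne] at hcard
  exact ⟨le_sup_right, by have := h.2; omega⟩

theorem boxContent_eq (hα : OneBox γ α) (hβ : OneBox α β) (hα' : OneBox γ α')
    (hβ' : OneBox α' β) (hne : α ≠ α') : boxContent γ α = boxContent α' β := by
  rw [← hα.inf_eq hα' hne, ← hβ.sup_eq hβ' hne, boxContent_inf_left]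

/-- The lower covers of a cell are the cells directly above it and to its left, so a box that is
added right after another one and lies weakly below and to the right of it is adjacent to it. -/
theorem exists_insert_insert (h : OneBox γ α) (h' : OneBox α β) :
    ∃ p q, p ∉ γ ∧ q ∉ α ∧ α.cells = insert p γ.cells ∧ β.cells = insert q α.cells ∧
      (p ⋖ q ∨ ¬ p ≤ q ∧ ¬ q ≤ p) := by
  obtain ⟨p, hp, hα⟩ := h.exists_insert
  obtain ⟨q, hq, hβ⟩ := h'.exists_insert
  have hpα : p ∈ α.cells := hα ▸ Finset.mem_insert_self p _
  have hqβ : q ∈ β.cells := hβ ▸ Finset.mem_insert_self q _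
  have hqp : ¬ q ≤ p := fun hle => hq (α.isLowerSet hle hpα)
  refine ⟨p, q, hp, hq, hα, hβ, ?_⟩
  by_cases hpq : p ≤ q
  · refine Or.inl ⟨lt_of_le_not_ge hpq hqp, fun c hpc hcq => hp ?_⟩
    have hc : c ∈ β.cells := β.isLowerSet hcq.le hqβ
    rw [hβ, hα, Finset.mem_insert, Finset.mem_insert] at hc
    exact γ.isLowerSet hpc.le ((hc.resolve_left hcq.ne).resolve_left hpc.ne')
  · exact Or.inr ⟨hpq, hqp⟩

end OneBox

theorem cellContent_of_covBy {p q : ℕ × ℕ} (h : p ⋖ q) :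
    cellContent q = cellContent p + 1 ∨ cellContent p = cellContent q + 1 := by
  simp only [Prod.covBy_iff, Nat.covBy_iff_add_one_eq] at h
  simp only [cellContent]
  omega

theorem exists_oneBox_of_maximal {β : YoungDiagram} {p : ℕ × ℕ} (hp : Maximal (· ∈ β) p) :
    ∃ α, p ∉ α ∧ OneBox α β ∧ boxContent α β = cellContent p := by
  let α : YoungDiagram := ⟨β.cells.erase p, by
    rw [Finset.coe_erase]
    exact β.isLowerSet.erase fun c hc hpc => (hp.2 hc hpc).antisymm hpc⟩
  have hpα : p ∉ α := fun h => Finset.notMem_erase p β.cells h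
  have hβ : β.cells = insert p α.cells := (Finset.insert_erase hp.1).symm
  exact ⟨α, hpα, .of_insert hpα hβ, boxContent_eq_cellContent hpα hβ⟩

/-- Two contents are far apart if boxes with these contents cannot be adjacent. -/
def FarApart (a b : ℤ) : Prop := a + 2 ≤ b ∨ b + 2 ≤ a

theorem FarApart.symm {a b : ℤ} (h : FarApart a b) : FarApart b a := Or.symm h

theorem FarApart.ne {a b : ℤ} (h : FarApart a b) : a ≠ b := by
  simp only [FarApart] at h
  omega

theorem not_farApart_of_covBy {p q : ℕ × ℕ} (h : p ⋖ q) :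
    ¬ FarApart (cellContent p) (cellContent q) := by
  have := cellContent_of_covBy h
  simp only [FarApart]
  omega

theorem farApart_cellContent {p q : ℕ × ℕ} (hpq : ¬ p ≤ q) (hqp : ¬ q ≤ p) :
    FarApart (cellContent p) (cellContent q) := by
  simp only [Prod.le_def] at hpq hqp
  simp only [FarApart, cellContent]
  omega

theorem adjCell_iff_covBy {p q : ℕ × ℕ} : AdjCell p q ↔ p ⋖ q ∨ q ⋖ p := by
  simp only [AdjCell, Prod.covBy_iff, Nat.covBy_iff_add_one_eq]
  omega

namespace OneBox

variable {α α' β β' γ δ : YoungDiagram}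

theorem boxContent_ne (h : OneBox γ α) (h' : OneBox α β) : boxContent γ α ≠ boxContent α β := by
  obtain ⟨p, q, hp, hq, hα, hβ, hpq | ⟨hpq, hqp⟩⟩ := h.exists_insert_insert h'
  all_goals rw [boxContent_eq_cellContent hp hα, boxContent_eq_cellContent hq hβ]
  · have := cellContent_of_covBy hpq
    omega
  · exact (farApart_cellContent hpq hqp).ne

theorem target_unique (h : OneBox α β) (h' : OneBox α β')
    (hc : boxContent α β = boxContent α β') : β = β' := by
  by_contra hne
  refine h'.boxContent_ne (h.sup_right h' hne) ?_
  rw [← hc, ← boxContent_inf_left, h.inf_eq h' hne]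

theorem source_unique (h : OneBox α β) (h' : OneBox α' β)
    (hc : boxContent α β = boxContent α' β) : α = α' := by
  by_contra hne
  refine (h.inf_left h' hne).boxContent_ne h ?_
  rw [hc, boxContent_inf_left, h.sup_eq h' hne]

/-- A later box on the diagonal of `p` requires both the right and the lower neighbour of `p`. -/
theorem boxContent_ne_of_three (h : OneBox γ α) (h' : OneBox α β) (h'' : OneBox β δ) :
    boxContent γ α ≠ boxContent β δ := by
  obtain ⟨p, hp, hα⟩ := h.exists_insert
  obtain ⟨q, -, hβ⟩ := h'.exists_insert
  obtain ⟨r, hr, hδ⟩ := h''.exists_insert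
  rw [boxContent_eq_cellContent hp hα, boxContent_eq_cellContent hr hδ]
  intro hc
  have hpr : ¬ r ≤ p := fun hle => hr (β.isLowerSet hle (by simp [hβ, hα]))
  simp only [cellContent, Prod.le_def] at hc hpr
  have eq_q : ∀ c : ℕ × ℕ, p < c → c < r → c = q := fun c hpc hcr => by
    have hcδ : c ∈ δ.cells := δ.isLowerSet hcr.le (by simp [hδ])
    have hcγ : c ∉ γ.cells := fun hc => hp (γ.isLowerSet hpc.le hc)
    simpa [hδ, hβ, hα, hcr.ne, hpc.ne', hcγ] using hcδ
  have hlower := eq_q (p.1 + 1, p.2) (by simp only [Prod.lt_iff]; omega)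
    (by simp only [Prod.lt_iff]; omega)
  have hright := eq_q (p.1, p.2 + 1) (by simp only [Prod.lt_iff]; omega)
    (by simp only [Prod.lt_iff]; omega)
  simp [← hlower] at hright

theorem nonadjacent_iff (h : OneBox γ α) (h' : OneBox α β) :
    (∃ c ∈ β.cells, ∃ d ∈ β.cells, c ∉ γ.cells ∧ d ∉ γ.cells ∧ c ≠ d ∧ ¬ AdjCell c d) ↔
      FarApart (boxContent γ α) (boxContent α β) := by
  obtain ⟨p, q, hp, hq, hα, hβ, hpq⟩ := h.exists_insert_insert h'
  rw [boxContent_eq_cellContent hp hα, boxContent_eq_cellContent hq hβ]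
  have hqγ : q ∉ γ := fun hqγ => hq (h.1 hqγ)
  have mem_iff : ∀ c, c ∈ β.cells ∧ c ∉ γ.cells ↔ c = p ∨ c = q := fun c => by
    simp only [hβ, hα, Finset.mem_insert, YoungDiagram.mem_cells]
    constructor
    · tauto
    · rintro (rfl | rfl) <;> simp [hp, hqγ]
  constructor
  · rintro ⟨c, hcβ, d, hdβ, hcγ, hdγ, hcd, hadj⟩
    rw [adjCell_iff_covBy, not_or] at hadj
    obtain ⟨hpq, hqp⟩ := hpq.resolve_left fun hpq => by
      obtain rfl | rfl := (mem_iff c).1 ⟨hcβ, hcγ⟩ <;>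
        obtain rfl | rfl := (mem_iff d).1 ⟨hdβ, hdγ⟩ <;> tauto
    exact farApart_cellContent hpq hqp
  · intro hfar
    obtain ⟨hpβ, hpγ⟩ := (mem_iff p).2 (Or.inl rfl)
    obtain ⟨hqβ, hqγ⟩ := (mem_iff q).2 (Or.inr rfl)
    refine ⟨p, hpβ, q, hqβ, hpγ, hqγ, fun hpq => hfar.ne (hpq ▸ rfl), ?_⟩
    rw [adjCell_iff_covBy]
    rintro (hadj | hadj)
    · exact not_farApart_of_covBy hadj hfar
    · exact not_farApart_of_covBy hadj hfar.symm

theorem exists_ne_of_farApart (h : OneBox γ α) (h' : OneBox α β)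
    (hfar : FarApart (boxContent γ α) (boxContent α β)) :
    ∃ δ, OneBox γ δ ∧ OneBox δ β ∧ α ≠ δ := by
  obtain ⟨p, q, hp, hq, hα, hβ, hpq⟩ := h.exists_insert_insert h'
  have hcp := boxContent_eq_cellContent hp hα
  rw [hcp, boxContent_eq_cellContent hq hβ] at hfar
  have hpq : ¬ p ≤ q := (hpq.resolve_left fun hpq => not_farApart_of_covBy hpq hfar).1
  have hpα : p ∈ α := by simp [← YoungDiagram.mem_cells, hα]
  have hmax : Maximal (· ∈ β) p := ⟨h'.1 hpα, fun c hc hpc => by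
    change c ∈ β.cells at hc
    rw [hβ, hα, Finset.mem_insert, Finset.mem_insert] at hc
    obtain rfl | rfl | hc := hc
    · exact absurd hpc hpq
    · exact le_rfl
    · exact absurd (γ.isLowerSet hpc hc) hp⟩
  obtain ⟨δ, hpδ, hδ, hcδ⟩ := exists_oneBox_of_maximal hmax
  have hne : α ≠ δ := fun hαδ => hpδ (hαδ ▸ hpα)
  obtain rfl : γ = α ⊓ δ := h.source_unique (h'.inf_left hδ hne) (by
    rw [hcp, boxContent_inf_left, h'.sup_eq hδ hne, hcδ])
  exact ⟨δ, inf_comm δ α ▸ hδ.inf_left h' hne.symm, hδ, hne⟩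

theorem farApart_of_ne (h : OneBox γ α) (h' : OneBox α β) (k : OneBox γ δ) (k' : OneBox δ β)
    (hne : α ≠ δ) : FarApart (boxContent γ α) (boxContent α β) := by
  rw [← k.boxContent_eq k' h h' hne.symm]
  obtain ⟨p, hp, hα⟩ := h.exists_insert
  obtain ⟨q, hq, hδ⟩ := k.exists_insert
  rw [boxContent_eq_cellContent hp hα, boxContent_eq_cellContent hq hδ]
  have hpq : p ≠ q := fun hpq => hne (YoungDiagram.ext (by rw [hα, hδ, hpq]))
  refine farApart_cellContent (fun hle => ?_) fun hle => ?_
  · have : p ∈ δ.cells := δ.isLowerSet hle (by simp [hδ])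
    simp_all
  · have : q ∈ α.cells := α.isLowerSet hle (by simp [hα])
    simp_all

end OneBox

/-! ### Growth squares -/

/-- A unit square of a growth diagram: two ways `γ ⊂ α ⊂ β` and `γ ⊂ δ ⊂ β` of adding two boxes,
subject to the local recurrence. -/
structure GrowthSquare (γ α δ β : YoungDiagram) : Prop where
  bottom : OneBox γ α
  right : OneBox α β
  left : OneBox γ δ
  top : OneBox δ β
  growthSq : GrowthSq γ α δ β

/-- The effect of a growth square on contents: two boxes that are far apart are interchanged,
while for adjacent boxes the two intermediate diagrams agree. Going from `γ` to `β`, the contents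
are `a`, `b` through one intermediate diagram and `b'`, `a'` through the other; two successive boxes
never lie on one diagonal, so `a ≠ b`. -/
def ContentSq (a b b' a' : ℤ) : Prop :=
  a ≠ b ∧ (FarApart a b ∧ b' = b ∧ a' = a ∨ ¬ FarApart a b ∧ b' = a ∧ a' = b)

theorem ContentSq.reverse {a b b' a' : ℤ} (h : ContentSq a b b' a') : ContentSq a' b' b a := by
  simp only [ContentSq, FarApart] at *
  omega

theorem ContentSq.unique {a b b₁ a₁ b₂ a₂ : ℤ} (h₁ : ContentSq a b b₁ a₁)
    (h₂ : ContentSq a b b₂ a₂) : b₁ = b₂ ∧ a₁ = a₂ := by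
  simp only [ContentSq] at h₁ h₂
  grind

theorem OneBox.exists_growthSquare {γ α β : YoungDiagram} (h : OneBox γ α) (h' : OneBox α β) :
    ∃ δ, GrowthSquare γ α δ β := by
  by_cases hfar : FarApart (boxContent γ α) (boxContent α β)
  · obtain ⟨δ, k, k', hne⟩ := h.exists_ne_of_farApart h' hfar
    exact ⟨δ, h, h', k, k', fun _ => hne⟩
  · exact ⟨α, h, h', h, h', fun hc => absurd ((h.nonadjacent_iff h').1 hc) hfar⟩

namespace GrowthSquare

variable {γ α δ δ' β : YoungDiagram}

theorem symm (h : GrowthSquare γ α δ β) : GrowthSquare γ δ α β :=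
  ⟨h.left, h.top, h.bottom, h.right, fun hc => (h.growthSq hc).symm⟩

theorem contentSq (h : GrowthSquare γ α δ β) :
    ContentSq (boxContent γ α) (boxContent α β) (boxContent γ δ) (boxContent δ β) := by
  refine ⟨h.bottom.boxContent_ne h.right, ?_⟩
  by_cases hne : α = δ
  · subst hne
    refine Or.inr ⟨fun hfar => ?_, rfl, rfl⟩
    exact h.growthSq ((h.bottom.nonadjacent_iff h.right).2 hfar) rfl
  · exact Or.inl ⟨h.bottom.farApart_of_ne h.right h.left h.top hne,
      h.left.boxContent_eq h.top h.bottom h.right (Ne.symm hne),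
      (h.bottom.boxContent_eq h.right h.left h.top hne).symm⟩

theorem unique (h : GrowthSquare γ α δ β) (h' : GrowthSquare γ α δ' β) : δ = δ' := by
  refine h.left.target_unique h'.left ?_
  exact (h.contentSq.unique h'.contentSq).1

end GrowthSquare

/-! ### Knuth moves -/

/-- The Knuth relation between the words `xyz` and `pqr`: two neighbouring letters are
interchanged next to a letter whose value is strictly between them. -/
def KnuthMove (x y z p q r : ℤ) : Prop :=
  (p = x ∧ q = z ∧ r = y ∧ (y < x ∧ x < z ∨ z < x ∧ x < y)) ∨
    (p = y ∧ q = x ∧ r = z ∧ (x < z ∧ z < y ∨ y < z ∧ z < x))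

theorem KnuthMove.symm {x y z p q r : ℤ} (h : KnuthMove x y z p q r) :
    KnuthMove p q r x y z := by
  simp only [KnuthMove] at *
  omega

theorem KnuthMove.reverse {x y z p q r : ℤ} (h : KnuthMove x y z p q r) :
    KnuthMove z y x r q p := by
  simp only [KnuthMove] at *
  omega

/-- A box of content `u` slides leftwards through boxes of contents `x`, `y`, `z`, which become
`x'`, `y'`, `z'`, and comes out with content `t`. The inequalities record that two boxes on one
diagonal are separated by at least two other boxes. -/
def SlideThrough (x y z u t x' y' z' : ℤ) : Prop :=
  ∃ v w, ContentSq z u v z' ∧ ContentSq y v w y' ∧ ContentSq x w t x' ∧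
    y ≠ u ∧ x ≠ v ∧ w ≠ z' ∧ t ≠ y'

theorem SlideThrough.reverse {x y z u t x' y' z' : ℤ} (h : SlideThrough x y z u t x' y' z') :
    SlideThrough z' y' x' t u z y x := by
  obtain ⟨v, w, hz, hy, hx, hyu, hxv, hwz, hty⟩ := h
  exact ⟨w, v, hx.reverse, hy.reverse, hz.reverse, hty.symm, hwz.symm, hxv.symm, hyu.symm⟩

/-- Sliding a box of content `u` through two boxes that are far apart does not depend on their
order, except when `u` lies on the unique diagonal between theirs. -/
theorem ContentSq.slide_comm {y z u v w y' z' v' w' q' r' : ℤ} (hyz : FarApart y z)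
    (hz : ContentSq z u v z') (hy : ContentSq y v w y')
    (hr : ContentSq y u v' r') (hq : ContentSq z v' w' q') :
    w = w' ∧ q' = z' ∧ r' = y' ∧ (v = u ∨ v' = u) ∨
      z' = u ∧ r' = u ∧ y' = y ∧ q' = z ∧ w = z ∧ w' = y ∧
        (y + 1 = u ∧ u + 1 = z ∨ z + 1 = u ∧ u + 1 = y) := by
  simp only [ContentSq, FarApart] at *
  obtain ⟨hzne, ⟨hz, rfl, rfl⟩ | ⟨hz, rfl, rfl⟩⟩ := hz <;>
  obtain ⟨hrne, ⟨hr, rfl, rfl⟩ | ⟨hr, rfl, rfl⟩⟩ := hr <;>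
  obtain ⟨hyne, ⟨hy, rfl, rfl⟩ | ⟨hy, rfl, rfl⟩⟩ := hy <;>
  obtain ⟨hqne, ⟨hq, rfl, rfl⟩ | ⟨hq, rfl, rfl⟩⟩ := hq <;>
  omega

theorem ContentSq.between_of_between_left {x y z u v w t x' y' z' : ℤ} (hyx : y < x) (hxz : x < z)
    (hxu : x ≠ u) (hz : ContentSq z u v z') (hy : ContentSq y v w y') (hx : ContentSq x w t x') :
    y' < x' ∧ x' < z' := by
  simp only [ContentSq, FarApart] at *
  obtain ⟨hzne, ⟨hz, rfl, rfl⟩ | ⟨hz, rfl, rfl⟩⟩ := hz <;>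
  obtain ⟨hyne, ⟨hy, rfl, rfl⟩ | ⟨hy, rfl, rfl⟩⟩ := hy <;>
  obtain ⟨hxne, ⟨hx, rfl, rfl⟩ | ⟨hx, rfl, rfl⟩⟩ := hx <;>
  omega

theorem ContentSq.between_of_between_right {x y z u v w t x' y' z' : ℤ} (hxz : x < z) (hzy : z < y)
    (hxu : x ≠ u) (hyu : y ≠ u) (hz : ContentSq z u v z') (hy : ContentSq y v w y')
    (hx : ContentSq x w t x') :
    x' < z' ∧ z' < y' := by
  simp only [ContentSq, FarApart] at *
  obtain ⟨hzne, ⟨hz, rfl, rfl⟩ | ⟨hz, rfl, rfl⟩⟩ := hz <;>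
  obtain ⟨hyne, ⟨hy, rfl, rfl⟩ | ⟨hy, rfl, rfl⟩⟩ := hy <;>
  obtain ⟨hxne, ⟨hx, rfl, rfl⟩ | ⟨hx, rfl, rfl⟩⟩ := hx <;>
  omega

theorem SlideThrough.knuthMove_left {x y z u t x' y' z' t' p' q' r' : ℤ} (hyx : y < x)
    (hxz : x < z) (h : SlideThrough x y z u t x' y' z') (h' : SlideThrough x z y u t' p' q' r') :
    t = t' ∧ KnuthMove x' y' z' p' q' r' := by
  obtain ⟨v, w, hz, hy, hx, -, hxv, -, -⟩ := h
  obtain ⟨v', w', hr, hq, hp, -, hxv', -, -⟩ := h'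
  have hyz : FarApart y z := by simp only [FarApart]; omega
  obtain ⟨rfl, rfl, rfl, hvu⟩ | ⟨hz', hr', hy', hq', hw, hw', hu⟩ :=
    hz.slide_comm hyz hy hr hq
  · obtain ⟨rfl, rfl⟩ := hx.unique hp
    have hxu : x ≠ u := by rintro rfl; tauto
    exact ⟨rfl, Or.inl ⟨rfl, rfl, rfl,
      Or.inl (hz.between_of_between_left hyx hxz hxu hy hx)⟩⟩
  · simp only [ContentSq, FarApart] at hx hp
    have ht : t = x ∧ x' = z := by omega
    have ht' : t' = x ∧ p' = y := by omega
    simp only [KnuthMove]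
    omega

theorem SlideThrough.knuthMove_right {x y z u t x' y' z' t' p' q' r' : ℤ} (hxz : x < z)
    (hzy : z < y) (h : SlideThrough x y z u t x' y' z') (h' : SlideThrough y x z u t' p' q' r') :
    t = t' ∧ KnuthMove x' y' z' p' q' r' := by
  obtain ⟨v, w, hz, hy, hx, hyu, -⟩ := h
  obtain ⟨v', w', hr, hq, hp, hxu, -⟩ := h'
  obtain ⟨rfl, rfl⟩ := hz.unique hr
  have hxy : FarApart x y := by simp only [FarApart]; omega
  obtain ⟨rfl, rfl, rfl, -⟩ | ⟨-, -, -, -, -, -, hv⟩ := hy.slide_comm hxy hx hq hp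
  · exact ⟨rfl, Or.inr ⟨rfl, rfl, rfl,
      Or.inl (hz.between_of_between_right hxz hzy hxu hyu hy hx)⟩⟩
  · simp only [ContentSq, FarApart] at hz
    omega

theorem KnuthMove.slide {x y z p q r u t x' y' z' t' p' q' r' : ℤ}
    (hk : KnuthMove x y z p q r) (h : SlideThrough x y z u t x' y' z')
    (h' : SlideThrough p q r u t' p' q' r') : t = t' ∧ KnuthMove x' y' z' p' q' r' := by
  obtain ⟨rfl, rfl, rfl, ⟨hyx, hxz⟩ | ⟨hzx, hxy⟩⟩ | ⟨rfl, rfl, rfl, ⟨hxz, hzy⟩ | ⟨hyz, hzx⟩⟩ := hk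
  · exact h.knuthMove_left hyx hxz h'
  · exact (h'.knuthMove_left hzx hxy h).imp Eq.symm .symm
  · exact h.knuthMove_right hxz hzy h'
  · exact (h'.knuthMove_right hyz hzx h).imp Eq.symm .symm

/-! ### Slides through chains -/

section Chains

variable {m n k : ℕ} {S T S' T' : ℕ → YoungDiagram} {α β δ : YoungDiagram}

theorem IsChain'.mono (h : IsChain' m S) (hn : n ≤ m) : IsChain' n S :=
  fun i hi => h i (hi.trans_le hn)

theorem IsChain'.congr (h : IsChain' m S) (hST : Set.EqOn S T (Set.Icc 0 m)) : IsChain' m T := by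
  intro i hi
  rw [← hST ⟨i.zero_le, hi.le⟩, ← hST ⟨(i + 1).zero_le, hi⟩]
  exact h i hi

theorem IsChain'.extend (h : IsChain' m S) (hβ : OneBox (S m) β) :
    IsChain' (m + 1) (Function.update S (m + 1) β) := by
  intro i hi
  obtain hi | rfl := Nat.lt_succ_iff_lt_or_eq.1 hi
  · simpa [hi.ne, (hi.trans m.lt_succ_self).ne] using h i hi
  · simpa using hβ

theorem IsChain'.update (h : IsChain' m S) (hl : OneBox (S k) δ) (hr : OneBox δ (S (k + 2))) :
    IsChain' m (Function.update S (k + 1) δ) := by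
  intro i hi
  obtain rfl | hik := eq_or_ne i k
  · simpa using hl
  obtain rfl | hik' := eq_or_ne i (k + 1)
  · simpa using hr
  · simpa [hik, hik'] using h i hi

/-- A single box slides through the chain `S`, which becomes the chain `T`: a row of `m` unit
squares of a growth diagram. -/
structure IsSlide (m : ℕ) (S T : ℕ → YoungDiagram) : Prop where
  rung : ∀ j ≤ m, OneBox (S j) (T j)
  square : ∀ j < m, GrowthSquare (S j) (S (j + 1)) (T j) (T (j + 1))

/-- The content of the `k`-th box added along the chain `S`, counted from `0`. -/
def stepContent (S : ℕ → YoungDiagram) (k : ℕ) : ℤ := boxContent (S k) (S (k + 1))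

namespace IsSlide

theorem isChain_left (h : IsSlide m S T) : IsChain' m S := fun j hj => (h.square j hj).bottom

theorem isChain_right (h : IsSlide m S T) : IsChain' m T := fun j hj => (h.square j hj).top

theorem extend (h : IsSlide m S T) (hsq : GrowthSquare (S m) α (T m) β) :
    IsSlide (m + 1) (Function.update S (m + 1) α) (Function.update T (m + 1) β) := by
  refine ⟨fun j hj => ?_, fun j hj => ?_⟩
  · obtain hj | rfl := Nat.le_succ_iff.1 hj
    · simpa [(Nat.lt_succ_of_le hj).ne] using h.rung j hj
    · simpa using hsq.right
  · obtain hj | rfl := Nat.lt_succ_iff_lt_or_eq.1 hj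
    · simpa [hj.ne, (hj.trans m.lt_succ_self).ne] using h.square j hj
    · simpa using hsq

theorem right_eqOn (h : IsSlide m S T) (h' : IsSlide m S' T') (hn : n ≤ m)
    (hS : Set.EqOn S S' (Set.Icc k n)) (hT : T n = T' n) : Set.EqOn T T' (Set.Icc k n) := by
  rintro j ⟨hkj, hjn⟩
  induction hjn using Nat.decreasingInduction with
  | self => exact hT
  | of_succ j hjn ih =>
    have hsq := h'.square j (hjn.trans_le hn)
    rw [← hS ⟨hkj, hjn.le⟩, ← hS ⟨hkj.trans j.le_succ, hjn⟩, ← ih (hkj.trans j.le_succ)] at hsq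
    exact (h.square j (hjn.trans_le hn)).unique hsq

theorem left_eqOn (h : IsSlide m S T) (h' : IsSlide m S' T') (hn : n ≤ m)
    (hT : Set.EqOn T T' (Set.Icc k n)) (hS : S k = S' k) : Set.EqOn S S' (Set.Icc k n) := by
  rintro j ⟨hkj, hjn⟩
  induction j, hkj using Nat.le_induction with
  | base => exact hS
  | succ j hkj ih =>
    have hsq := h'.square j (hjn.trans hn)
    rw [← hT ⟨hkj, j.le_succ.trans hjn⟩, ← hT ⟨hkj.trans j.le_succ, hjn⟩,
      ← ih (j.le_succ.trans hjn)] at hsq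
    exact (h.square j (hjn.trans hn)).symm.unique hsq.symm

theorem slideThrough (h : IsSlide m S T) (hk : k + 3 ≤ m) :
    SlideThrough (stepContent S k) (stepContent S (k + 1)) (stepContent S (k + 2))
      (boxContent (S (k + 3)) (T (k + 3))) (boxContent (S k) (T k))
      (stepContent T k) (stepContent T (k + 1)) (stepContent T (k + 2)) := by
  have hx := h.square k (by omega)
  have hy := h.square (k + 1) (by omega)
  have hz := h.square (k + 2) (by omega)
  exact ⟨_, _, hz.contentSq, hy.contentSq, hx.contentSq,
    hy.bottom.boxContent_ne_of_three hz.bottom hz.right,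
    hx.bottom.boxContent_ne_of_three hy.bottom hy.right,
    hy.left.boxContent_ne_of_three hy.top hz.top,
    hx.left.boxContent_ne_of_three hx.top hy.top⟩

end IsSlide

theorem IsChain'.exists_isSlide_right (hS : IsChain' m S) (hβ : OneBox (S m) β) :
    ∃ T, IsSlide m S T ∧ T m = β := by
  induction m generalizing β with
  | zero =>
    refine ⟨fun _ => β, ⟨fun j hj => ?_, fun j hj => absurd hj j.not_lt_zero⟩, rfl⟩
    rwa [Nat.le_zero.1 hj]
  | succ m ih =>
    obtain ⟨δ, hsq⟩ := (hS m m.lt_succ_self).exists_growthSquare hβ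
    obtain ⟨T, hT, rfl⟩ := ih (hS.mono m.le_succ) hsq.left
    exact ⟨_, by simpa using hT.extend hsq, Function.update_self ..⟩

theorem IsChain'.exists_isSlide_left (hT : IsChain' m T) (hα : OneBox α (T 0)) :
    ∃ S, IsSlide m S T ∧ S 0 = α := by
  induction m with
  | zero =>
    refine ⟨fun _ => α, ⟨fun j hj => ?_, fun j hj => absurd hj j.not_lt_zero⟩, rfl⟩
    rwa [Nat.le_zero.1 hj]
  | succ m ih =>
    obtain ⟨S, hS, rfl⟩ := ih (hT.mono m.le_succ)
    obtain ⟨δ, hsq⟩ := (hS.rung m le_rfl).exists_growthSquare (hT m m.lt_succ_self)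
    exact ⟨_, by simpa using hS.extend hsq.symm, Function.update_of_ne (by omega) ..⟩

/-! ### Elementary dual equivalence -/

/-- The contents of the boxes `k`, `k + 1`, `k + 2` of the two chains differ by a Knuth move. -/
def KnuthAt (k : ℕ) (S S' : ℕ → YoungDiagram) : Prop :=
  KnuthMove (stepContent S k) (stepContent S (k + 1)) (stepContent S (k + 2))
    (stepContent S' k) (stepContent S' (k + 1)) (stepContent S' (k + 2))

theorem KnuthAt.slide_right (hK : KnuthAt k S S') (h : IsSlide m S T) (h' : IsSlide m S' T')
    (hk : k + 3 ≤ m) (hS : S k = S' k) (hS₃ : S (k + 3) = S' (k + 3))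
    (hT₃ : T (k + 3) = T' (k + 3)) : T k = T' k ∧ KnuthAt k T T' := by
  have hs' := h'.slideThrough hk
  rw [← hS₃, ← hT₃] at hs'
  obtain ⟨heq, hK'⟩ := hK.slide (h.slideThrough hk) hs'
  have hr' := h'.rung k (by omega)
  rw [← hS] at heq hr'
  exact ⟨(h.rung k (by omega)).target_unique hr' heq, hK'⟩

theorem KnuthAt.slide_left (hK : KnuthAt k T T') (h : IsSlide m S T) (h' : IsSlide m S' T')
    (hk : k + 3 ≤ m) (hS : S k = S' k) (hT : T k = T' k)
    (hT₃ : T (k + 3) = T' (k + 3)) : S (k + 3) = S' (k + 3) ∧ KnuthAt k S S' := by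
  have hs' := (h'.slideThrough hk).reverse
  rw [← hS, ← hT] at hs'
  obtain ⟨heq, hK'⟩ := hK.reverse.slide (h.slideThrough hk).reverse hs'
  have hr' := h'.rung (k + 3) hk
  rw [← hT₃] at heq hr'
  exact ⟨(h.rung (k + 3) hk).source_unique hr' heq, hK'.reverse⟩

/-- The equivalence relation on chains of length `m` generated by elementary dual equivalences:
replacing two consecutive diagrams of a chain so that the contents of the three boxes concerned
change by a Knuth move. -/
inductive ElemDualEquiv (m : ℕ) : (ℕ → YoungDiagram) → (ℕ → YoungDiagram) → Prop
  | of_eqOn {S S' : ℕ → YoungDiagram} (hS : IsChain' m S) (h : Set.EqOn S S' (Set.Icc 0 m)) :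
      ElemDualEquiv m S S'
  | of_knuthAt {S S' : ℕ → YoungDiagram} {k : ℕ} (hS : IsChain' m S) (hS' : IsChain' m S')
      (hk : k + 3 ≤ m) (hbot : Set.EqOn S S' (Set.Icc 0 k))
      (htop : Set.EqOn S S' (Set.Icc (k + 3) m)) (hK : KnuthAt k S S') : ElemDualEquiv m S S'
  | trans {S S' S'' : ℕ → YoungDiagram} (h : ElemDualEquiv m S S')
      (h' : ElemDualEquiv m S' S'') : ElemDualEquiv m S S''

namespace ElemDualEquiv

theorem isChain_left (h : ElemDualEquiv m S S') : IsChain' m S := by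
  induction h with
  | of_eqOn hS | of_knuthAt hS => exact hS
  | trans _ _ ih _ => exact ih

theorem isChain_right (h : ElemDualEquiv m S S') : IsChain' m S' := by
  induction h with
  | of_eqOn hS h => exact hS.congr h
  | of_knuthAt _ hS' => exact hS'
  | trans _ _ _ ih => exact ih

theorem first_eq (h : ElemDualEquiv m S S') : S 0 = S' 0 := by
  induction h with
  | of_eqOn _ h => exact h ⟨le_rfl, m.zero_le⟩
  | @of_knuthAt _ _ k _ _ _ hbot _ _ => exact hbot ⟨le_rfl, k.zero_le⟩
  | trans _ _ ih ih' => exact ih.trans ih'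

theorem last_eq (h : ElemDualEquiv m S S') : S m = S' m := by
  induction h with
  | of_eqOn _ h => exact h ⟨m.zero_le, le_rfl⟩
  | of_knuthAt _ _ hk _ htop _ => exact htop ⟨hk, le_rfl⟩
  | trans _ _ ih ih' => exact ih.trans ih'

theorem slide_right (hE : ElemDualEquiv m S S') (h : IsSlide m S T) (h' : IsSlide m S' T')
    (hT : T m = T' m) : ElemDualEquiv m T T' := by
  induction hE generalizing T T' with
  | of_eqOn _ hS => exact .of_eqOn h.isChain_right (h.right_eqOn h' le_rfl hS hT)
  | @of_knuthAt S S' k _ _ hk hbot htop hK =>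
    have htop' := h.right_eqOn h' le_rfl htop hT
    obtain ⟨hTk, hK'⟩ := hK.slide_right h h' hk (hbot ⟨k.zero_le, le_rfl⟩)
      (htop ⟨le_rfl, hk⟩) (htop' ⟨le_rfl, hk⟩)
    exact .of_knuthAt h.isChain_right h'.isChain_right hk
      (h.right_eqOn h' (by omega) hbot hTk) htop' hK'
  | trans hE _ ih ih' =>
    have hrung := h.rung m le_rfl
    rw [hE.last_eq] at hrung
    obtain ⟨T₁, h₁, hT₁⟩ := hE.isChain_right.exists_isSlide_right hrung
    exact (ih h h₁ hT₁.symm).trans (ih' h₁ h' (hT₁.trans hT))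

theorem slide_left (hE : ElemDualEquiv m T T') (h : IsSlide m S T) (h' : IsSlide m S' T')
    (hS : S 0 = S' 0) : ElemDualEquiv m S S' := by
  induction hE generalizing S S' with
  | of_eqOn _ hT => exact .of_eqOn h.isChain_left (h.left_eqOn h' le_rfl hT hS)
  | @of_knuthAt T T' k _ _ hk hbot htop hK =>
    have hbot' := h.left_eqOn h' (by omega) hbot hS
    obtain ⟨hSk, hK'⟩ := hK.slide_left h h' hk (hbot' ⟨k.zero_le, le_rfl⟩)
      (hbot ⟨k.zero_le, le_rfl⟩) (htop ⟨le_rfl, hk⟩)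
    exact .of_knuthAt h.isChain_left h'.isChain_left hk hbot'
      (h.left_eqOn h' le_rfl htop hSk) hK'
  | trans hE _ ih ih' =>
    have hrung := h.rung 0 m.zero_le
    rw [hE.first_eq] at hrung
    obtain ⟨S₁, h₁, hS₁⟩ := hE.isChain_right.exists_isSlide_left hrung
    exact (ih h h₁ hS₁.symm).trans (ih' h₁ h' (hS₁.trans hS))

theorem extend (h : ElemDualEquiv m S S') (hβ : OneBox (S m) β) :
    ElemDualEquiv (m + 1) (Function.update S (m + 1) β) (Function.update S' (m + 1) β) := by
  induction h with
  | of_eqOn hS h =>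
    refine .of_eqOn (hS.extend hβ) fun j hj => ?_
    obtain rfl | hjm := eq_or_ne j (m + 1)
    · simp
    · simpa [hjm] using h ⟨hj.1, Nat.le_of_lt_succ (hj.2.lt_of_ne hjm)⟩
  | @of_knuthAt S S' k hS hS' hk hbot htop hK =>
    have hβ' := hβ
    rw [htop ⟨hk, le_rfl⟩] at hβ'
    refine .of_knuthAt (hS.extend hβ) (hS'.extend hβ') (hk.trans m.le_succ) (fun j hj => ?_)
      (fun j hj => ?_) ?_
    · have hjm : j ≠ m + 1 := by have := hj.2; omega
      simpa [hjm] using hbot hj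
    · obtain rfl | hjm := eq_or_ne j (m + 1)
      · simp
      · simpa [hjm] using htop ⟨hj.1, Nat.le_of_lt_succ (hj.2.lt_of_ne hjm)⟩
    · have hne : k ≠ m + 1 ∧ k ≠ m ∧ k + 1 ≠ m ∧ k + 2 ≠ m := by omega
      simpa [KnuthAt, stepContent, hne] using hK
  | trans hE _ ih ih' => exact (ih hβ).trans (ih' (by rwa [← hE.last_eq]))

theorem of_flip (hS : IsChain' (k + 3) S) (hl : OneBox (S (k + 1)) δ)
    (hr : OneBox δ (S (k + 3))) (hne : S (k + 2) ≠ δ)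
    (hbetween : stepContent S (k + 1) < stepContent S k ∧ stepContent S k < stepContent S (k + 2) ∨
      stepContent S (k + 2) < stepContent S k ∧ stepContent S k < stepContent S (k + 1)) :
    ElemDualEquiv (k + 3) S (Function.update S (k + 2) δ) := by
  have hαδ : stepContent S (k + 1) = boxContent δ (S (k + 3)) :=
    (hS (k + 1) (by omega)).boxContent_eq (hS (k + 2) (by omega)) hl hr hne
  have hδα : boxContent (S (k + 1)) δ = stepContent S (k + 2) :=
    hl.boxContent_eq hr (hS (k + 1) (by omega)) (hS (k + 2) (by omega)) hne.symm
  refine .of_knuthAt hS (hS.update hl hr) le_rfl (fun j hj => ?_) (fun j hj => ?_) ?_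
  · exact (Function.update_of_ne (by have := hj.2; omega) ..).symm
  · exact (Function.update_of_ne (by have := hj.1; omega) ..).symm
  · exact Or.inl ⟨by simp [stepContent], by simpa [stepContent] using hδα,
      by simpa [stepContent] using hαδ.symm, hbetween⟩

end ElemDualEquiv

/-! ### Chains of straight shape -/

theorem exists_corner {β : YoungDiagram} {p : ℕ × ℕ} (hp : p ∈ β) :
    ∃ q ∈ β, p ≤ q ∧ ∃ α, OneBox α β ∧ boxContent α β = cellContent q := by
  obtain ⟨q, hpq, hq⟩ := β.cells.exists_le_maximal ((YoungDiagram.mem_cells p).2 hp)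
  simp only [YoungDiagram.mem_cells] at hq
  obtain ⟨α, -, hα⟩ := exists_oneBox_of_maximal hq
  exact ⟨q, hq.prop, hpq, α, hα⟩

-- A corner of `α ⊓ α'` weakly beyond the meet of the two removed cells works.
theorem OneBox.exists_between {α α' β : YoungDiagram} (h : OneBox α β) (h' : OneBox α' β)
    (hne : α ≠ α') : ∃ ν, OneBox ν (α ⊓ α') ∧
      (boxContent α' β < boxContent ν (α ⊓ α') ∧ boxContent ν (α ⊓ α') < boxContent α β ∨
        boxContent α β < boxContent ν (α ⊓ α') ∧ boxContent ν (α ⊓ α') < boxContent α' β) := by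
  obtain ⟨p, hp, hβ⟩ := h.exists_insert
  obtain ⟨p', hp', hβ'⟩ := h'.exists_insert
  have hpp' : p ≠ p' := by
    rintro rfl
    exact hne (h.source_unique h' (by
      rw [boxContent_eq_cellContent hp hβ, boxContent_eq_cellContent hp' hβ']))
  have hpα' : p ∈ α' := by
    have hpβ : p ∈ insert p' α'.cells := hβ' ▸ hβ ▸ Finset.mem_insert_self p α.cells
    simpa [hpp'] using hpβ
  have hpα : p' ∈ α := by
    have hpβ' : p' ∈ insert p α.cells := hβ ▸ hβ' ▸ Finset.mem_insert_self p' α'.cells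
    simpa [hpp'.symm] using hpβ'
  have not_le_of_mem {c} (hc : c ∈ α ⊓ α') : ¬ p ≤ c ∧ ¬ p' ≤ c :=
    ⟨fun hle => hp (α.isLowerSet hle (YoungDiagram.mem_inf.1 hc).1),
      fun hle => hp' (α'.isLowerSet hle (YoungDiagram.mem_inf.1 hc).2)⟩
  have hinf : p ⊓ p' ∈ α ⊓ α' :=
    YoungDiagram.mem_inf.2 ⟨α.isLowerSet inf_le_right hpα, α'.isLowerSet inf_le_left hpα'⟩
  obtain ⟨q, hq, hle, ν, hν, hνq⟩ := exists_corner hinf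
  refine ⟨ν, hν, ?_⟩
  rw [hνq, boxContent_eq_cellContent hp hβ, boxContent_eq_cellContent hp' hβ']
  have hq' := not_le_of_mem hq
  simp only [Prod.le_def, Prod.fst_inf, Prod.snd_inf, inf_le_iff] at hle hq'
  simp only [cellContent]
  omega

theorem IsChain'.card_eq (h : IsChain' n S) (h₀ : S 0 = ⊥) {j : ℕ} (hj : j ≤ n) :
    (S j).cells.card = j := by
  induction j with
  | zero => simp [h₀]
  | succ j ih => rw [(h j hj).2, ih (j.le_succ.trans hj)]

theorem exists_isChain_of_card_eq {ν : YoungDiagram} (hν : ν.cells.card = n) :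
    ∃ S, IsChain' n S ∧ S 0 = ⊥ ∧ S n = ν := by
  induction n generalizing ν with
  | zero =>
    have hbot : ν = ⊥ := YoungDiagram.ext (by simpa using hν)
    exact ⟨fun _ => ⊥, fun i hi => absurd hi i.not_lt_zero, rfl, hbot.symm⟩
  | succ n ih =>
    obtain ⟨p, hp⟩ := Finset.card_pos.1 (n.succ_pos.trans_eq hν.symm)
    obtain ⟨q, -, -, α, hα, -⟩ := exists_corner ((YoungDiagram.mem_cells p).1 hp)
    obtain ⟨S, hS, hS₀, rfl⟩ := ih (Nat.succ_injective (hα.2.symm.trans hν))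
    exact ⟨_, hS.extend hα, by simpa using hS₀, Function.update_self ..⟩

theorem exists_isChain_of_oneBox {ν μ : YoungDiagram} (hν : OneBox ν μ) (hμ : OneBox μ α)
    (hα : OneBox α β) : ∃ k W, IsChain' (k + 3) W ∧ W 0 = ⊥ ∧
      W k = ν ∧ W (k + 1) = μ ∧ W (k + 2) = α ∧ W (k + 3) = β := by
  obtain ⟨k, hk⟩ : ∃ k, ν.cells.card = k := ⟨_, rfl⟩
  obtain ⟨P, hP, hP₀, rfl⟩ := exists_isChain_of_card_eq hk
  have hQ := (hP.extend hν).extend (β := α) (by simpa using hμ)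
  have hW := hQ.extend (β := β) (by simpa using hα)
  exact ⟨k, _, hW, by simpa using hP₀, by simp [add_assoc], by simp [add_assoc],
    by simp, by simp⟩

namespace ElemDualEquiv

theorem of_truncate (h : ElemDualEquiv m S S') (hS : IsChain' (m + 1) S)
    (hlast : S (m + 1) = S' (m + 1)) : ElemDualEquiv (m + 1) S S' := by
  have hext := h.extend (hS m m.lt_succ_self)
  rwa [Function.update_eq_self, hlast, Function.update_eq_self] at hext

theorem exists_of_ne (hS : IsChain' (n + 1) S) (hS' : IsChain' (n + 1) S') (h₀ : S 0 = ⊥)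
    (hlast : S (n + 1) = S' (n + 1)) (hne : S n ≠ S' n) :
    ∃ W W', ElemDualEquiv (n + 1) W W' ∧ W 0 = ⊥ ∧ W n = S n ∧ W' n = S' n ∧
      W (n + 1) = S (n + 1) := by
  have hα := hS n n.lt_succ_self
  have hα' := hS' n n.lt_succ_self
  rw [← hlast] at hα'
  have hμ := hα.inf_left hα' hne
  have hμ' : OneBox (S n ⊓ S' n) (S' n) := inf_comm (S' n) (S n) ▸ hα'.inf_left hα hne.symm
  obtain ⟨ν, hν, hbetween⟩ := hα.exists_between hα' hne
  obtain ⟨k, W, hW, hW₀, rfl, hWμ, hWα, hWβ⟩ := exists_isChain_of_oneBox hν hμ hα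
  obtain rfl : n = k + 2 := by
    have hcard := hS.card_eq h₀ le_rfl
    rw [← hWβ, hW.card_eq hW₀ le_rfl] at hcard
    omega
  refine ⟨W, _, of_flip hW (hWμ ▸ hμ') (hWβ ▸ hα') (hWα ▸ hne) ?_, hW₀, hWα,
    Function.update_self .., hWβ⟩
  simp only [stepContent, hWμ, hWα, hWβ]
  rwa [hμ.boxContent_eq hα hμ' hα' hne]

theorem of_straight (hS : IsChain' n S) (hS' : IsChain' n S') (h₀ : S 0 = ⊥) (h₀' : S' 0 = ⊥)
    (hlast : S n = S' n) : ElemDualEquiv n S S' := by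
  induction n generalizing S S' with
  | zero => exact .of_eqOn hS (by simpa using hlast)
  | succ n ih =>
    have of_eq {U V : ℕ → YoungDiagram} (hU : IsChain' (n + 1) U) (hV : IsChain' (n + 1) V)
        (hU₀ : U 0 = ⊥) (hV₀ : V 0 = ⊥) (hn : U n = V n) (hn' : U (n + 1) = V (n + 1)) :
        ElemDualEquiv (n + 1) U V :=
      (ih (hU.mono n.le_succ) (hV.mono n.le_succ) hU₀ hV₀ hn).of_truncate hU hn'
    by_cases hn : S n = S' n
    · exact of_eq hS hS' h₀ h₀' hn hlast
    · obtain ⟨W, W', hWW', hW₀, hWn, hWn', hWlast⟩ := exists_of_ne hS hS' h₀ hlast hn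
      have hSW := of_eq hS hWW'.isChain_left h₀ hW₀ hWn.symm hWlast.symm
      have hWS' := of_eq hWW'.isChain_right hS' (hWW'.first_eq.symm.trans hW₀) h₀' hWn'
        (hWW'.last_eq.symm.trans (hWlast.trans hlast))
      exact (hSW.trans hWW').trans hWS'

end ElemDualEquiv

end Chains

/-! ### Growth diagrams and shuffles -/

section Growth

variable {m s t : ℕ} {L L' : ℕ → ℕ → YoungDiagram}
  {S T S' T' S₁ T₁ S₁' T₁' Q R R' : ℕ → YoungDiagram}

theorem isGrowth_iff : IsGrowth t s L ↔
    IsChain' s (L 0) ∧ ∀ i < t, IsSlide s (L i) (L (i + 1)) := by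
  refine ⟨fun ⟨hrung, hchain, hsq⟩ => ⟨fun j hj => hchain 0 j t.zero_le hj, fun i hi => ?_⟩,
    fun ⟨h₀, h⟩ => ⟨fun i j hi hj => (h i hi).rung j hj, fun i j hi hj => ?_,
      fun i j hi hj => ((h i hi).square j hj).growthSq⟩⟩
  · exact ⟨fun j hj => hrung i j hi hj, fun j hj => ⟨hchain i j hi.le hj, hrung i (j + 1) hi hj,
      hrung i j hi hj.le, hchain (i + 1) j hi hj, hsq i j hi hj⟩⟩
  · cases i with
    | zero => exact h₀ j hj
    | succ i => exact (h i hi).isChain_right j hj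

namespace IsGrowth

theorem isChain (h : IsGrowth t s L) {i : ℕ} (hi : i ≤ t) : IsChain' s (L i) :=
  fun j hj => h.2.1 i j hi hj

theorem isSlide (h : IsGrowth t s L) {i : ℕ} (hi : i < t) : IsSlide s (L i) (L (i + 1)) :=
  (isGrowth_iff.1 h).2 i hi

theorem transpose (h : IsGrowth t s L) : IsGrowth s t fun i j => L j i :=
  ⟨fun i j hi hj => h.2.1 j i hj hi, fun i j hi hj => h.1 j i hj hi,
    fun i j hi hj hc => (h.2.2 j i hj hi hc).symm⟩

theorem eqOn (h : IsGrowth t s L) (h' : IsGrowth t s L')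
    (hleft : Set.EqOn (L 0) (L' 0) (Set.Icc 0 s)) (htop : ∀ i ≤ t, L i s = L' i s) {i : ℕ}
    (hi : i ≤ t) : Set.EqOn (L i) (L' i) (Set.Icc 0 s) := by
  induction i with
  | zero => exact hleft
  | succ i ih =>
    exact (h.isSlide hi).right_eqOn (h'.isSlide hi) le_rfl (ih (i.le_succ.trans hi)) (htop _ hi)

theorem elemDualEquiv_of_left (h : IsGrowth t s L) (h' : IsGrowth t s L')
    (hleft : ElemDualEquiv s (L 0) (L' 0)) (htop : ∀ i ≤ t, L i s = L' i s) {i : ℕ}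
    (hi : i ≤ t) : ElemDualEquiv s (L i) (L' i) := by
  induction i with
  | zero => exact hleft
  | succ i ih =>
    exact (ih (i.le_succ.trans hi)).slide_right (h.isSlide hi) (h'.isSlide hi) (htop _ hi)

theorem elemDualEquiv_of_right (h : IsGrowth t s L) (h' : IsGrowth t s L')
    (hright : ElemDualEquiv s (L t) (L' t)) (hbot : ∀ i ≤ t, L i 0 = L' i 0) {i : ℕ}
    (hi : i ≤ t) : ElemDualEquiv s (L i) (L' i) := by
  induction hi using Nat.decreasingInduction with
  | self => exact hright
  | of_succ i hi ih => exact ih.slide_left (h.isSlide hi) (h'.isSlide hi) (hbot i hi.le)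

end IsGrowth

theorem IsChain'.exists_isGrowth (hS : IsChain' s S) (hT : IsChain' t T) (hST : S s = T 0) :
    ∃ L, IsGrowth t s L ∧ L 0 = S ∧ ∀ i ≤ t, L i s = T i := by
  induction t with
  | zero =>
    refine ⟨fun _ => S, isGrowth_iff.2 ⟨hS, fun i hi => absurd hi i.not_lt_zero⟩, rfl, ?_⟩
    simpa using hST
  | succ t ih =>
    obtain ⟨L, hL, rfl, hLT⟩ := ih (hT.mono t.le_succ)
    have hβ : OneBox (L t s) (T (t + 1)) := hLT t le_rfl ▸ hT t t.lt_succ_self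
    obtain ⟨Q, hQ, hQT⟩ := (hL.isChain le_rfl).exists_isSlide_right hβ
    refine ⟨Function.update L (t + 1) Q, isGrowth_iff.2 ⟨by simpa using hS, fun i hi => ?_⟩,
      by simp, fun i hi => ?_⟩
    · obtain hi | rfl := Nat.lt_succ_iff_lt_or_eq.1 hi
      · simpa [hi.ne, (hi.trans t.lt_succ_self).ne] using hL.isSlide hi
      · simpa using hQ
    · obtain hi | rfl := Nat.le_succ_iff.1 hi
      · simpa [(Nat.lt_succ_of_le hi).ne] using hLT i hi
      · simpa using hQT

theorem IsChain'.exists_shufflesTo (hS : IsChain' s S) (hT : IsChain' t T) (hST : S s = T 0) :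
    ∃ T' S', ShufflesTo s t S T T' S' := by
  obtain ⟨L, hL, rfl, hLT⟩ := hS.exists_isGrowth hT hST
  exact ⟨fun i => L i 0, L t, L, hL, fun _ _ => rfl, hLT, fun _ _ => rfl, fun _ _ => rfl⟩

namespace ShufflesTo

theorem symm (h : ShufflesTo s t S T T' S') : ShufflesTo t s T' S' S T := by
  obtain ⟨L, hL, hleft, htop, hbot, hright⟩ := h
  exact ⟨_, hL.transpose, hbot, hright, hleft, htop⟩

theorem isChain_left (h : ShufflesTo s t S T T' S') : IsChain' s S := by
  obtain ⟨L, hL, hleft, -⟩ := h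
  exact (hL.isChain t.zero_le).congr fun j hj => hleft j hj.2

theorem isChain_right (h : ShufflesTo s t S T T' S') : IsChain' s S' := by
  obtain ⟨L, hL, -, -, -, hright⟩ := h
  exact (hL.isChain le_rfl).congr fun j hj => hright j hj.2

theorem left_last (h : ShufflesTo s t S T T' S') : S s = T 0 := by
  obtain ⟨L, -, hleft, htop, -⟩ := h
  rw [← hleft s le_rfl, htop 0 t.zero_le]

theorem left_first (h : ShufflesTo s t S T T' S') : S 0 = T' 0 := by
  obtain ⟨L, -, hleft, -, hbot, -⟩ := h
  rw [← hleft 0 s.zero_le, hbot 0 t.zero_le]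

theorem right_first (h : ShufflesTo s t S T T' S') : S' 0 = T' t := by
  obtain ⟨L, -, -, -, hbot, hright⟩ := h
  rw [← hright 0 s.zero_le, hbot t le_rfl]

theorem right_eqOn (h : ShufflesTo s t S T T' S') (h₁ : ShufflesTo s t S₁ T₁ T₁' S₁')
    (hS : Set.EqOn S S₁ (Set.Icc 0 s)) (hT : Set.EqOn T T₁ (Set.Icc 0 t)) :
    Set.EqOn S' S₁' (Set.Icc 0 s) := by
  obtain ⟨L, hL, hleft, htop, -, hright⟩ := h
  obtain ⟨L₁, hL₁, hleft₁, htop₁, -, hright₁⟩ := h₁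
  intro j hj
  rw [← hright j hj.2, ← hright₁ j hj.2]
  refine hL.eqOn hL₁ (fun i hi => ?_) (fun i hi => ?_) le_rfl hj
  · rw [hleft i hi.2, hleft₁ i hi.2, hS hi]
  · rw [htop i hi, htop₁ i hi, hT ⟨i.zero_le, hi⟩]

end ShufflesTo

namespace ElemDualEquiv

theorem congr (h : ElemDualEquiv s S T) (hS : Set.EqOn S S₁ (Set.Icc 0 s))
    (hT : Set.EqOn T T₁ (Set.Icc 0 s)) : ElemDualEquiv s S₁ T₁ :=
  ((of_eqOn (h.isChain_left.congr hS) hS.symm).trans h).trans (of_eqOn h.isChain_right hT)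

theorem shufflesTo_right (hE : ElemDualEquiv s S S₁) (h : ShufflesTo s t S T T' S')
    (h₁ : ShufflesTo s t S₁ T T₁' S₁') :
    Set.EqOn T' T₁' (Set.Icc 0 t) ∧ ElemDualEquiv s S' S₁' := by
  obtain ⟨L, hL, hleft, htop, hbot, hright⟩ := h
  obtain ⟨L₁, hL₁, hleft₁, htop₁, hbot₁, hright₁⟩ := h₁
  have hE₀ := hE.congr (fun j hj => (hleft j hj.2).symm) (fun j hj => (hleft₁ j hj.2).symm)
  have hrow {i : ℕ} (hi : i ≤ t) : ElemDualEquiv s (L i) (L₁ i) :=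
    hL.elemDualEquiv_of_left hL₁ hE₀ (fun i hi => (htop i hi).trans (htop₁ i hi).symm) hi
  refine ⟨fun i hi => ?_, (hrow le_rfl).congr (fun j hj => hright j hj.2)
    (fun j hj => hright₁ j hj.2)⟩
  rw [← hbot i hi.2, ← hbot₁ i hi.2, (hrow hi.2).first_eq]

theorem shufflesTo_top_eqOn (hE : ElemDualEquiv s S' S₁') (h : ShufflesTo s t S T T' S')
    (h₁ : ShufflesTo s t S₁ T₁ T' S₁') : Set.EqOn T T₁ (Set.Icc 0 t) := by
  obtain ⟨L, hL, -, htop, hbot, hright⟩ := h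
  obtain ⟨L₁, hL₁, -, htop₁, hbot₁, hright₁⟩ := h₁
  have hEt := hE.congr (fun j hj => (hright j hj.2).symm) (fun j hj => (hright₁ j hj.2).symm)
  intro i hi
  rw [← htop i hi.2, ← htop₁ i hi.2]
  exact (hL.elemDualEquiv_of_right hL₁ hEt
    (fun i hi => (hbot i hi).trans (hbot₁ i hi).symm) hi.2).last_eq

theorem dualEquiv (h : ElemDualEquiv m S S') : DualEquiv m S S' :=
  ⟨h.first_eq, h.last_eq,
    fun _ _ _ _ _ _ h₁ h₂ i hi => (h.shufflesTo_right h₁ h₂).1 ⟨i.zero_le, hi⟩,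
    fun _ _ _ _ _ _ h₁ h₂ i hi => h.shufflesTo_top_eqOn h₁.symm h₂.symm ⟨i.zero_le, hi⟩⟩

end ElemDualEquiv

/-! ### Dual equivalence and slide equivalence -/

theorem DualEquiv.symm (h : DualEquiv m S T) : DualEquiv m T S :=
  ⟨h.1.symm, h.2.1.symm,
    fun _ _ _ _ _ _ h₁ h₂ i hi => (h.2.2.1 _ _ _ _ _ _ h₂ h₁ i hi).symm,
    fun _ _ _ _ _ _ h₁ h₂ i hi => (h.2.2.2 _ _ _ _ _ _ h₂ h₁ i hi).symm⟩

theorem DualEquiv.trans (h : DualEquiv m S T) (h' : DualEquiv m T Q) (hT : IsChain' m T) :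
    DualEquiv m S Q := by
  refine ⟨h.1.trans h'.1, h.2.1.trans h'.2.1, fun t U A B A' B' h₁ h₂ i hi => ?_,
    fun t U A B A' B' h₁ h₂ i hi => ?_⟩
  · obtain ⟨C, D, hTU⟩ := hT.exists_shufflesTo h₁.symm.isChain_right
      (h.2.1.symm.trans h₁.left_last)
    exact (h.2.2.1 _ _ _ _ _ _ h₁ hTU i hi).trans (h'.2.2.1 _ _ _ _ _ _ hTU h₂ i hi)
  · obtain ⟨C, D, hUT⟩ := h₁.isChain_left.exists_shufflesTo hT (h₁.left_last.trans h.1)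
    exact (h.2.2.2 _ _ _ _ _ _ h₁ hUT i hi).trans (h'.2.2.2 _ _ _ _ _ _ hUT h₂ i hi)

namespace Rectifies

theorem isChain (h : Rectifies m T R) : IsChain' m T := by
  obtain ⟨-, s, A, A', -, hA⟩ := h
  exact hA.symm.isChain_right

theorem isChain_rectification (h : Rectifies m T R) : IsChain' m R := by
  obtain ⟨-, s, A, A', -, hA⟩ := h
  exact hA.symm.isChain_left

-- All straight chains one can slide through `T` are dual equivalent, having the same shape `T 0`.
theorem unique (h : Rectifies m T R) (h' : Rectifies m T R') : Set.EqOn R R' (Set.Icc 0 m) := by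
  obtain ⟨-, s, A, A', hA₀, hA⟩ := h
  obtain ⟨-, s', B, B', hB₀, hB⟩ := h'
  have hlast : A s = B s' := hA.left_last.trans hB.left_last.symm
  obtain rfl : s = s' := by
    rw [← hA.isChain_left.card_eq hA₀ le_rfl, hlast, hB.isChain_left.card_eq hB₀ le_rfl]
  have hAB := ElemDualEquiv.of_straight hA.isChain_left hB.isChain_left hA₀ hB₀ hlast
  exact (hAB.shufflesTo_right hA hB).1

theorem congr_rectification (h : Rectifies m T R) (hR : Set.EqOn R R' (Set.Icc 0 m)) :
    Rectifies m T R' := by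
  obtain ⟨hR₀, s, A, A', hA₀, L, hL, hleft, htop, hbot, hright⟩ := h
  exact ⟨(hR ⟨le_rfl, m.zero_le⟩).symm.trans hR₀, s, A, A', hA₀, L, hL, hleft, htop,
    fun i hi => (hbot i hi).trans (hR ⟨i.zero_le, hi⟩), hright⟩

-- Slide `Q`, which is dual equivalent to `R`, back along the chain that rectifies `T` to `R`.
theorem exists_dualEquiv (h : Rectifies m T R) (hQ : IsChain' m Q) (hQ₀ : Q 0 = ⊥)
    (hRQ : R m = Q m) : ∃ T', DualEquiv m T' T ∧ Rectifies m T' Q := by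
  obtain ⟨hR₀, s, A, A', -, hA⟩ := id h
  obtain ⟨A₁, T', hT'⟩ := hQ.exists_shufflesTo hA.isChain_right
    (hRQ.symm.trans hA.right_first.symm)
  have hQR := ElemDualEquiv.of_straight hQ h.isChain_rectification hQ₀ hR₀ hRQ.symm
  exact ⟨T', (hQR.shufflesTo_right hT' hA.symm).2.dualEquiv, hQ₀, s, A₁, A',
    hT'.left_first.symm.trans hQ₀, hT'.symm⟩

end Rectifies

theorem SlideEquiv.symm (h : SlideEquiv m S T) : SlideEquiv m T S := by
  obtain ⟨R, hS, hT⟩ := h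
  exact ⟨R, hT, hS⟩

theorem SlideEquiv.trans (h : SlideEquiv m S T) (h' : SlideEquiv m T Q) : SlideEquiv m S Q := by
  obtain ⟨R, hS, hT⟩ := h
  obtain ⟨R', hT', hQ⟩ := h'
  exact ⟨R, hS, hQ.congr_rectification (hT'.unique hT)⟩

-- Shuffled with one straight chain, both tableaux give the same pair, and shuffling is invertible.
theorem DualEquiv.eqOn_of_slideEquiv (hd : DualEquiv m S T) (hs : SlideEquiv m S T) :
    Set.EqOn S T (Set.Icc 0 m) := by
  obtain ⟨R, ⟨-, s, A, B, hA₀, hS⟩, hT⟩ := hs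
  obtain ⟨R', B', hT'⟩ := hS.isChain_left.exists_shufflesTo hT.isChain
    (hS.left_last.trans hd.1)
  have hRR' : Set.EqOn R R' (Set.Icc 0 m) :=
    hT.unique ⟨hT'.left_first.symm.trans hA₀, s, A, B', hA₀, hT'⟩
  have hBB' : Set.EqOn B B' (Set.Icc 0 s) := fun i hi => hd.2.2.2 _ _ _ _ _ _ hS hT' i hi.2
  exact hS.symm.right_eqOn hT'.symm hRR' hBB'

end Growth

/-- Let `D` be a dual equivalence class (represented by a tableau `TD`) and `S` a slide
equivalence class (represented by a tableau `TS`), such that the rectification shape of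
`D` equals the shape of the rectification tableau of `S`.  Then there is a unique
tableau lying in both `D` and `S`. -/
theorem unique_tableau_in_dual_and_slide_class
    (m : ℕ) (TD TS : ℕ → YoungDiagram)
    (hTD : IsChain' m TD) (hTS : IsChain' m TS)
    (hshape : ∃ RD RS, Rectifies m TD RD ∧ Rectifies m TS RS ∧ RD m = RS m) :
    ∃ T : ℕ → YoungDiagram,
      (IsChain' m T ∧ DualEquiv m T TD ∧ SlideEquiv m T TS) ∧
      (∀ T' : ℕ → YoungDiagram,
        IsChain' m T' → DualEquiv m T' TD → SlideEquiv m T' TS →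
        ∀ i, i ≤ m → T' i = T i) := by
  obtain ⟨RD, RS, hD, hS, hlast⟩ := hshape
  obtain ⟨T, hdT, hT⟩ := hD.exists_dualEquiv hS.isChain_rectification hS.1 hlast
  have hsT : SlideEquiv m T TS := ⟨RS, hT, hS⟩
  refine ⟨T, ⟨hT.isChain, hdT, hsT⟩, fun T' _ hdT' hsT' i hi => ?_⟩
  exact (hdT'.trans hdT.symm hTD).eqOn_of_slideEquiv (hsT'.trans hsT.symm) ⟨i.zero_le, hi⟩
end
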